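/- arXiv:1003.6121 — 4 statements merged into one kernel-verified Lean document; each statement's English description precedes it below -/
import Mathlib

section
/- Let β>0 and V satisfy conditions C1–C3 with equilibrium density ρ, fix ε>0 small, and let I = [−2−ε, 2+ε]. Let p_1^{(n)} be the first marginal density of the β-ensemble with potential V restricted to I. Then there exists C>0 such that for all n ≥ 2: ∫_I ∫_I log(1/|λ−μ|) · ( p_1^{(n)}(λ) − ρ(λ) ) ( p_1^{(n)}(μ) − ρ(μ) ) dλ dμ ≤ C·(log n)/n. -/
/-!
The bound compares two estimates of the partition function `Z` of the gas of `n = k + 2` points on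
`I = [A, B] = [-2 - ε, 2 + ε]`. Write `p` for the one-point density and
`E(f, g) = ∬ log|x - y| f(x) g(y)`.

*Lower bound* (`partition_lower`). Since `ρ ≤ M`, Jensen's inequality under `ρ^{⊗n}` gives
`log Z ≥ -(n²β/2) ∫ Vρ + (β/2) n(n-1) E(ρ, ρ) - n log M`.

*Upper bound* (`partition_upper`). The Gibbs measure has entropy at most `n log (B - A)`. Its energy
involves the two-point function, but `log ((x - y)² + s²)` is a conditionally negative definite
kernel, so the mean regularized energy of the points is at most `n²` times that of `p`
(`energy_le_marginal`). Thus `log Z` is at most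
`n log (B - A) - (n²β/2) ∫ Vp + (β/2) n² E_s(p, p) + (β/2) n log (1/s)`, where `E_s` is `E` with
`|x - y|` replaced by `√((x - y)² + s²)`.

*Removing the regularization.* Markov's inequality for polynomials yields `p ≤ C₁ n³` on `I`
(`resP1_le`), and `E_s(p, p) - E(p, p) = O(√s n⁶)` (`smoothed_form_le`). The choice `s = n⁻¹⁴` makes
this `O(1/n)`, while `log (1/s) = 14 log n`.

*Equilibrium.* The Euler–Lagrange conditions give `∫ V(p - ρ) ≥ 2 E(p, ρ) - 2 E(ρ, ρ)`. Inserting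
this in the comparison of the two estimates and dividing by `n²β/2` leaves
`-E(p - ρ, p - ρ) ≤ (K + 14 log n) / n` (`energy_bound`).
-/

open MeasureTheory

/-- Unnormalized joint eigenvalue density of the β-ensemble with potential `V`. -/
noncomputable def betaWeight (β : ℝ) (V : ℝ → ℝ) (n : ℕ) (Λ : Fin n → ℝ) : ℝ :=
  (∏ i, Real.exp (-((n : ℝ) * β * V (Λ i)) / 2)) *
    ∏ i, ∏ j ∈ Finset.Ioi i, |Λ i - Λ j| ^ β

/-- Conditions C1–C3. -/
structure EquilC13 (V : ℝ → ℝ) (D : Set ℂ) (ρ : ℝ → ℝ) (P : ℂ → ℂ) : Prop where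
  D_open : IsOpen D
  D_supset : ∀ x : ℝ, x ∈ Set.Icc (-2:ℝ) 2 → (x : ℂ) ∈ D
  ρ_nonneg : ∀ x, 0 ≤ ρ x
  ρ_int : ∫ x, ρ x = 1
  ρ_supp : ∀ x, x ∉ Set.Icc (-2:ℝ) 2 → ρ x = 0
  P_anal : DifferentiableOn ℂ P D
  P_pos : ∃ c > 0, ∀ x : ℝ, x ∈ Set.Icc (-2:ℝ) 2 → (P x).im = 0 ∧ c ≤ (P x).re
  ρ_eq : ∀ x ∈ Set.Icc (-2:ℝ) 2,
    ρ x = (1 / (2 * Real.pi)) * (P x).re * Real.sqrt (4 - x ^ 2)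
  V_anal : ∃ Vc : ℂ → ℂ, DifferentiableOn ℂ Vc D ∧ ∀ x : ℝ, (x : ℂ) ∈ D → Vc x = V x
  equil : ∃ c : ℝ, (∀ x ∈ Set.Icc (-2:ℝ) 2,
      2 * (∫ μ, Real.log |x - μ| * ρ μ) - V x = c) ∧
    ∀ x, x ∉ Set.Icc (-2:ℝ) 2 → 2 * (∫ μ, Real.log |x - μ| * ρ μ) - V x < c

/-- Partition function of the β-ensemble restricted to the interval `[a,b]`. -/
noncomputable def resZ (β : ℝ) (V : ℝ → ℝ) (a b : ℝ) (n : ℕ) : ℝ :=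
  ∫ Λ in Set.univ.pi (fun _ : Fin n => Set.Icc a b), betaWeight β V n Λ

/-- First marginal density of the β-ensemble (`n = k+2` eigenvalues) restricted to `[a,b]`. -/
noncomputable def resP1 (β : ℝ) (V : ℝ → ℝ) (a b : ℝ) (k : ℕ) (l : ℝ) : ℝ :=
  (resZ β V a b (k + 2))⁻¹ *
    ∫ y in Set.univ.pi (fun _ : Fin (k + 1) => Set.Icc a b),
      betaWeight β V (k + 2) (Fin.cons l y)

/-! ### Markov's inequality and the weight of one point -/

/-- Markov's inequality at an endpoint `b` of an interval, in either orientation; it follows from the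
extremality of the Chebyshev polynomials. -/
lemma markov_endpoint (Q : Polynomial ℝ) (N : ℕ) (hdeg : Q.degree ≤ N) (M a b : ℝ)
    (hM : ∀ x ∈ Set.uIcc a b, |Q.eval x| ≤ M) :
    |b - a| * |Q.derivative.eval b| ≤ 2 * (N : ℝ) ^ 2 * M := by
  have hone : ∀ R : Polynomial ℝ, R.degree ≤ N →
      (∀ x ∈ Set.Icc (-1 : ℝ) 1, |R.eval x| ≤ 1) → R.derivative.eval 1 ≤ (N : ℝ) ^ 2 := by
    intro R hR hb
    have h := Polynomial.Chebyshev.eval_iterate_derivative_le_of_forall_abs_le_one (k := 1)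
      (le_refl (1 : ℝ)) hR hb
    simp only [Function.iterate_one, Polynomial.Chebyshev.derivative_T_eval_one] at h
    exact_mod_cast h
  set l : Polynomial ℝ :=
    Polynomial.C ((b - a) / 2) * Polynomial.X + Polynomial.C ((a + b) / 2) with hl
  have hldeg : l.natDegree ≤ 1 := Polynomial.natDegree_linear_le
  have hmem : ∀ x ∈ Set.Icc (-1 : ℝ) 1, (b - a) / 2 * x + (a + b) / 2 ∈ Set.uIcc a b := by
    intro x hx
    rcases le_total a b with h | h
    · rw [Set.uIcc_of_le h]; constructor <;> nlinarith [hx.1, hx.2]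
    · rw [Set.uIcc_of_ge h]; constructor <;> nlinarith [hx.1, hx.2]
  have hM0 : 0 ≤ M := (abs_nonneg _).trans (hM b Set.right_mem_uIcc)
  -- Any level above `M` may be normalised to `1`; this also covers `M = 0`.
  have key : ∀ M' > M, |b - a| * |Q.derivative.eval b| ≤ 2 * (N : ℝ) ^ 2 * M' := by
    intro M' hM'
    have hpos : 0 < M' := hM0.trans_lt hM'
    have hs : ∀ s : ℝ, |s| = 1 →
        s * ((b - a) / 2 * Q.derivative.eval b) ≤ (N : ℝ) ^ 2 * M' := by
      intro s hs
      have := hone (Polynomial.C (s / M') * Q.comp l) ?_ ?_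
      · simp [Polynomial.derivative_comp, hl] at this
        rw [show (b - a) / 2 + (a + b) / 2 = b by ring] at this
        rw [← div_le_iff₀ hpos]
        refine le_trans (le_of_eq ?_) this
        ring
      · refine Polynomial.degree_le_of_natDegree_le ?_
        refine (Polynomial.natDegree_C_mul_le _ _).trans ?_
        refine Polynomial.natDegree_comp_le.trans ?_
        have := Polynomial.natDegree_le_of_degree_le hdeg
        nlinarith
      · intro x hx
        have h1 := hM _ (hmem x hx)
        simp only [hl, Polynomial.eval_mul, Polynomial.eval_C, Polynomial.eval_comp,
          Polynomial.eval_add, Polynomial.eval_X, abs_mul, abs_div, hs, abs_of_pos hpos]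
        rw [one_div, inv_mul_le_iff₀ hpos]
        linarith
    have h1 := hs 1 (by simp)
    have h2 := hs (-1) (by simp)
    have : |(b - a) / 2 * Q.derivative.eval b| ≤ (N : ℝ) ^ 2 * M' :=
      abs_le.2 ⟨by linarith, by linarith⟩
    rw [abs_mul, abs_div, abs_two] at this
    linarith
  refine le_of_forall_pos_le_add fun e he => ?_
  have := key (M + e / (2 * (N : ℝ) ^ 2 + 1)) (by simp; positivity)
  refine this.trans ?_
  have : 2 * (N : ℝ) ^ 2 * (e / (2 * (N : ℝ) ^ 2 + 1)) ≤ e := by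
    rw [← mul_div_assoc, div_le_iff₀ (by positivity)]
    nlinarith
  linarith

/-- Markov's inequality inside `[a, b]`: the endpoint bounds on `[a, x]` and `[x, b]` are added up. -/
lemma markov_interval (Q : Polynomial ℝ) (N : ℕ) (hdeg : Q.degree ≤ N) (M a b : ℝ)
    (hM : ∀ x ∈ Set.Icc a b, |Q.eval x| ≤ M) (x : ℝ) (hx : x ∈ Set.Icc a b) :
    (b - a) * |Q.derivative.eval x| ≤ 4 * (N : ℝ) ^ 2 * M := by
  have h1 := markov_endpoint Q N hdeg M a x (fun z hz => hM z (by
    rw [Set.uIcc_of_le hx.1] at hz; exact ⟨hz.1, hz.2.trans hx.2⟩))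
  have h2 := markov_endpoint Q N hdeg M b x (fun z hz => hM z (by
    rw [Set.uIcc_of_ge hx.2] at hz; exact ⟨hx.1.trans hz.1, hz.2⟩))
  rw [abs_of_nonneg (by linarith [hx.1])] at h1
  rw [abs_of_nonpos (by linarith [hx.2])] at h2
  linarith

/-- A polynomial of degree at most `N` stays above half of its maximum over `[a, b]` on a subinterval
of length of order `N⁻²`, next to a point of maximum. -/
lemma exists_large_subinterval (Q : Polynomial ℝ) (N : ℕ) (hN : 1 ≤ N) (hdeg : Q.degree ≤ N)
    (a b : ℝ) (hab : a < b) :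
    ∃ c d, a ≤ c ∧ d ≤ b ∧ d - c = (b - a) / (8 * (N : ℝ) ^ 2) ∧
      ∀ x ∈ Set.Icc c d, ∀ z ∈ Set.Icc a b, |Q.eval z| ≤ 2 * |Q.eval x| := by
  obtain ⟨x₁, hx₁, hmax⟩ := isCompact_Icc.exists_isMaxOn (Set.nonempty_Icc.2 hab.le)
    (f := fun x => |Q.eval x|) (by fun_prop)
  have hmax' : ∀ z ∈ Set.Icc a b, |Q.eval z| ≤ |Q.eval x₁| := fun z hz => hmax hz
  have hN' : (1 : ℝ) ≤ N := by exact_mod_cast hN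
  have hN2 : (1 : ℝ) ≤ (N : ℝ) ^ 2 := one_le_pow₀ hN'
  set h := (b - a) / (8 * (N : ℝ) ^ 2) with hh
  have hpos : 0 < b - a := by linarith
  have hh0 : 0 < h := by positivity
  have hh1 : h ≤ (b - a) / 2 := by
    rw [hh]; apply div_le_div_of_nonneg_left hpos.le (by norm_num); linarith
  have hmark := markov_interval Q N hdeg _ a b hmax'
  have hclose : ∀ x ∈ Set.Icc a b, |x - x₁| ≤ h → |Q.eval x₁| ≤ 2 * |Q.eval x| := by
    intro x hx hxh
    have := (convex_Icc a b).norm_image_sub_le_of_norm_deriv_le (f := fun x => Q.eval x)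
      (C := 4 * (N : ℝ) ^ 2 * |Q.eval x₁| / (b - a)) (fun z _ => Q.differentiable z)
      (fun z hz => by
        rw [Polynomial.deriv, Real.norm_eq_abs, le_div_iff₀ hpos, mul_comm]
        exact hmark z hz) hx₁ hx
    simp only [Real.norm_eq_abs] at this
    have h3 : 4 * (N : ℝ) ^ 2 * |Q.eval x₁| / (b - a) * |x - x₁| ≤ |Q.eval x₁| / 2 := by
      calc _ ≤ 4 * (N : ℝ) ^ 2 * |Q.eval x₁| / (b - a) * h := by gcongr
        _ = _ := by rw [hh]; field_simp; ring
    have h4 := abs_sub_abs_le_abs_sub (Q.eval x₁) (Q.eval x)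
    rw [abs_sub_comm] at h4
    linarith
  rcases le_total x₁ ((a + b) / 2) with hm | hm
  · refine ⟨x₁, x₁ + h, hx₁.1, by linarith, by ring, fun x hx z hz => ?_⟩
    exact (hmax' z hz).trans (hclose x ⟨hx₁.1.trans hx.1, by linarith [hx.2]⟩
      (abs_le.2 ⟨by linarith [hx.1], by linarith [hx.2]⟩))
  · refine ⟨x₁ - h, x₁, by linarith, hx₁.2, by ring, fun x hx z hz => ?_⟩
    exact (hmax' z hz).trans (hclose x ⟨by linarith [hx.1], hx.2.trans hx₁.2⟩
      (abs_le.2 ⟨by linarith [hx.1], by linarith [hx.2]⟩))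

/-- As a function of one point, the others being frozen at `y`, the weight is bounded by a power of
`n = k + 2` times its integral. Within distance `1/n` of `l` the factor `exp (-nβV/2)` varies by a
bounded factor, and the polynomial `∏ (x - y j)` is handled by `exists_large_subinterval`. -/
lemma weight_le_integral (β : ℝ) (hβ : 0 < β) (V : ℝ → ℝ) (hV : Continuous V) (A B L : ℝ)
    (hAB : 1 ≤ B - A) (hL : 0 ≤ L)
    (hlip : ∀ x ∈ Set.Icc A B, ∀ z ∈ Set.Icc A B, |V x - V z| ≤ L * |x - z|)
    (k : ℕ) (y : Fin (k + 1) → ℝ) (l : ℝ) (hl : l ∈ Set.Icc A B) :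
    Real.exp (-((k + 2 : ℝ) * β * V l) / 2) * ∏ j, |l - y j| ^ β ≤
      (8 * 2 ^ β * Real.exp (β * L / 2)) * (k + 2 : ℝ) ^ 3 *
      ∫ x in Set.Icc A B, Real.exp (-((k + 2 : ℝ) * β * V x) / 2) * ∏ j, |x - y j| ^ β := by
  set f : ℝ → ℝ := fun x => Real.exp (-((k + 2 : ℝ) * β * V x) / 2) * ∏ j, |x - y j| ^ β with hf
  have hfc : Continuous f := by
    refine Continuous.mul (by fun_prop) (continuous_finsetProd _ fun j _ => ?_)
    exact Continuous.rpow_const (by fun_prop) (fun _ => Or.inr hβ.le)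
  have hf0 : ∀ x, 0 ≤ f x := fun x => by positivity
  set Q : Polynomial ℝ := ∏ j, (Polynomial.X - Polynomial.C (y j)) with hQ
  have hQdeg : Q.degree ≤ ((k + 1 : ℕ) : WithBot ℕ) := by
    rw [hQ, Polynomial.degree_prod]; simp
  have hQev : ∀ x, ∏ j, |x - y j| ^ β = |Q.eval x| ^ β := by
    intro x
    rw [hQ, Polynomial.eval_prod, Finset.abs_prod, Real.finsetProd_rpow _ _ (by simp)]
    simp
  set n : ℝ := (k + 2 : ℝ) with hn
  have hn1 : 1 ≤ n := by rw [hn]; linarith [(Nat.cast_nonneg k : (0 : ℝ) ≤ k)]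
  have hnpos : 0 < n := by linarith
  have hinv : 1 / n ≤ 1 := by rw [div_le_one hnpos]; exact hn1
  have hinv0 : 0 < 1 / n := by positivity
  obtain ⟨a, b, haA, hbB, hab, hla, hlb⟩ :
      ∃ a b, A ≤ a ∧ b ≤ B ∧ b - a = 1 / n ∧ a ≤ l ∧ l ≤ b := by
    rcases le_total (l + 1 / n) B with h | h
    · exact ⟨l, l + 1 / n, hl.1, h, by ring, le_rfl, by linarith⟩
    · exact ⟨B - 1 / n, B, by linarith, le_rfl, by ring, by linarith, hl.2⟩
  obtain ⟨c, d, hac, hdb, hcd, hlarge⟩ :=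
    exists_large_subinterval Q (k + 1) (by omega) hQdeg a b (by linarith)
  have hcd0 : c ≤ d := by
    have : 0 ≤ d - c := by rw [hcd, hab]; positivity
    linarith
  have hpt : ∀ x ∈ Set.Icc c d, f l ≤ 2 ^ β * Real.exp (β * L / 2) * f x := by
    intro x hx
    have h1 : |Q.eval l| ^ β ≤ 2 ^ β * |Q.eval x| ^ β := by
      rw [← Real.mul_rpow (by norm_num) (abs_nonneg _)]
      exact Real.rpow_le_rpow (abs_nonneg _) (hlarge x hx l ⟨hla, hlb⟩) hβ.le
    have h2 : Real.exp (-(n * β * V l) / 2) ≤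
        Real.exp (β * L / 2) * Real.exp (-(n * β * V x) / 2) := by
      rw [← Real.exp_add]
      apply Real.exp_le_exp.2
      have h3 := hlip x ⟨by linarith [hx.1], by linarith [hx.2]⟩ l hl
      have h4 : |x - l| ≤ 1 / n := abs_le.2 ⟨by linarith [hx.1], by linarith [hx.2]⟩
      have h5 : V x - V l ≤ L * (1 / n) :=
        (le_abs_self _).trans (h3.trans (mul_le_mul_of_nonneg_left h4 hL))
      have h6 : n * (V x - V l) ≤ L := by
        calc _ ≤ n * (L * (1 / n)) := by gcongr
          _ = L := by field_simp
      nlinarith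
    simp only [hf, hQev]
    calc _ ≤ (Real.exp (β * L / 2) * Real.exp (-(n * β * V x) / 2)) *
          (2 ^ β * |Q.eval x| ^ β) := by gcongr
      _ = _ := by ring
  have hsub : Set.Icc c d ⊆ Set.Icc A B := Set.Icc_subset_Icc (by linarith) (by linarith)
  have hint : ∫ x in Set.Icc c d, f l ≤
      ∫ x in Set.Icc c d, 2 ^ β * Real.exp (β * L / 2) * f x :=
    setIntegral_mono_on (by simp) ((hfc.const_mul _ |>.continuousOn).integrableOn_Icc)
      measurableSet_Icc hpt
  rw [setIntegral_const, integral_const_mul, smul_eq_mul, Real.volume_real_Icc_of_le hcd0,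
    hcd, hab] at hint
  have hmono : ∫ x in Set.Icc c d, f x ≤ ∫ x in Set.Icc A B, f x :=
    setIntegral_mono_set hfc.continuousOn.integrableOn_Icc
      (Filter.Eventually.of_forall hf0) hsub.eventuallyLE
  have hK : 0 < (2 : ℝ) ^ β * Real.exp (β * L / 2) := by positivity
  have h7 := hint.trans (mul_le_mul_of_nonneg_left hmono hK.le)
  have h8 : 1 / (8 * n ^ 3) ≤ 1 / n / (8 * ((k + 1 : ℕ) : ℝ) ^ 2) := by
    rw [div_div]
    apply one_div_le_one_div_of_le (by positivity)
    have : ((k + 1 : ℕ) : ℝ) ^ 2 ≤ n ^ 2 := by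
      apply pow_le_pow_left₀ (by positivity); rw [hn]; push_cast; linarith
    nlinarith
  have h9 := (mul_le_mul_of_nonneg_right h8 (hf0 l)).trans h7
  rw [one_div, inv_mul_le_iff₀ (by positivity)] at h9
  refine h9.trans (le_of_eq ?_)
  ring

/-! ### Conditional negative definiteness of the logarithmic kernel -/

lemma integral_exp_mul_cos (s x : ℝ) (hs : 0 < s) :
    IntegrableOn (fun u => Real.exp (-s * u) * Real.cos (x * u)) (Set.Ioi 0) ∧
    ∫ u in Set.Ioi (0 : ℝ), Real.exp (-s * u) * Real.cos (x * u) = s / (x ^ 2 + s ^ 2) := by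
  set a : ℂ := -s + x * Complex.I with ha
  have hre : a.re < 0 := by simp [ha, hs]
  have hint := integrableOn_exp_mul_complex_Ioi hre 0
  have hval := integral_exp_mul_complex_Ioi hre 0
  have hfun : ∀ u : ℝ, (Complex.exp (a * u)).re = Real.exp (-s * u) * Real.cos (x * u) := by
    intro u
    rw [Complex.exp_re]; simp [ha]
  have h2 := integral_re hint
  refine ⟨(hint.re).congr (Filter.Eventually.of_forall fun u => ?_), ?_⟩
  · simpa using hfun u
  · simp only [RCLike.re_to_complex, hfun] at h2
    rw [h2, hval]
    simp only [Complex.ofReal_zero, mul_zero, Complex.exp_zero]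
    rw [Complex.div_re]
    simp [ha, Complex.normSq_apply]
    ring

/-- The Poisson kernel is positive definite, being the Fourier transform of `exp (-s|u|)`. -/
lemma poisson_posdef {ι : Type*} [Fintype ι] (c x : ι → ℝ) (s : ℝ) (hs : 0 < s) :
    0 ≤ ∑ i, ∑ j, c i * c j * (s / ((x i - x j) ^ 2 + s ^ 2)) := by
  have h : ∑ i, ∑ j, c i * c j * (s / ((x i - x j) ^ 2 + s ^ 2)) =
      ∫ u in Set.Ioi (0 : ℝ), ∑ i, ∑ j, c i * c j *
        (Real.exp (-s * u) * Real.cos ((x i - x j) * u)) := by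
    rw [integral_finsetSum _ (fun i _ => integrable_finsetSum _ fun j _ =>
      (integral_exp_mul_cos s _ hs).1.const_mul _)]
    refine Finset.sum_congr rfl fun i _ => ?_
    rw [integral_finsetSum _ (fun j _ => (integral_exp_mul_cos s _ hs).1.const_mul _)]
    refine Finset.sum_congr rfl fun j _ => ?_
    rw [integral_const_mul, (integral_exp_mul_cos s _ hs).2]
  rw [h]
  refine integral_nonneg fun u => ?_
  have : ∑ i, ∑ j, c i * c j * (Real.exp (-s * u) * Real.cos ((x i - x j) * u)) =
      Real.exp (-s * u) *
        ((∑ i, c i * Real.cos (x i * u)) ^ 2 + (∑ i, c i * Real.sin (x i * u)) ^ 2) := by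
    rw [sq, sq, Finset.sum_mul_sum, Finset.sum_mul_sum, ← Finset.sum_add_distrib, Finset.mul_sum]
    refine Finset.sum_congr rfl fun i _ => ?_
    rw [← Finset.sum_add_distrib, Finset.mul_sum]
    refine Finset.sum_congr rfl fun j _ => ?_
    rw [sub_mul, Real.cos_sub]; ring
  simp only [Pi.zero_apply]
  rw [this]; positivity

/-- The kernel `log ((x - y)² + s²)` is conditionally negative definite: the quadratic form increases
with `s`, its derivative being a Poisson-kernel form, and tends to `0` as `s → ∞`. -/
lemma log_kernel_condNegDef {ι : Type*} [Fintype ι] (c x : ι → ℝ) (hc : ∑ i, c i = 0)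
    (s : ℝ) (hs : 0 < s) :
    ∑ i, ∑ j, c i * c j * Real.log ((x i - x j) ^ 2 + s ^ 2) ≤ 0 := by
  set φ : ℝ → ℝ := fun t => ∑ i, ∑ j, c i * c j * Real.log ((x i - x j) ^ 2 + t ^ 2) with hφ
  have hder : ∀ t ∈ Set.Ioi (0 : ℝ), HasDerivAt φ
      (∑ i, ∑ j, c i * c j * (2 * t / ((x i - x j) ^ 2 + t ^ 2))) t := by
    intro t ht
    refine HasDerivAt.fun_sum fun i _ => HasDerivAt.fun_sum fun j _ => ?_
    refine HasDerivAt.const_mul _ ?_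
    have ht : 0 < t := ht
    have := (((hasDerivAt_id t).pow 2).const_add ((x i - x j) ^ 2)).log
      (by simp; positivity)
    simpa using this
  have hmono : MonotoneOn φ (Set.Ioi 0) := by
    refine monotoneOn_of_deriv_nonneg (convex_Ioi 0)
      (fun t ht => (hder t ht).continuousAt.continuousWithinAt)
      (fun t ht => ((hder t (interior_subset ht)).differentiableAt).differentiableWithinAt) ?_
    intro t ht
    rw [(hder t (interior_subset ht)).deriv]
    have := poisson_posdef c x t (interior_subset ht)
    have h2 : ∑ i, ∑ j, c i * c j * (2 * t / ((x i - x j) ^ 2 + t ^ 2)) =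
        2 * ∑ i, ∑ j, c i * c j * (t / ((x i - x j) ^ 2 + t ^ 2)) := by
      simp only [Finset.mul_sum]
      refine Finset.sum_congr rfl fun i _ => Finset.sum_congr rfl fun j _ => ?_
      ring
    rw [h2]; linarith
  -- Since the total mass vanishes, `log (t ^ 2)` may be subtracted from the kernel.
  have hlim : Filter.Tendsto φ Filter.atTop (nhds 0) := by
    have h1 : Filter.Tendsto (fun t : ℝ => ∑ i, ∑ j, c i * c j *
        Real.log ((x i - x j) ^ 2 * (t ^ 2)⁻¹ + 1)) Filter.atTop (nhds 0) := by
      have : (0 : ℝ) = ∑ i : ι, ∑ j : ι, c i * c j * Real.log ((x i - x j) ^ 2 * 0 + 1) := by simp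
      rw [this]
      refine tendsto_finsetSum _ fun i _ => tendsto_finsetSum _ fun j _ => ?_
      refine Filter.Tendsto.const_mul _ ?_
      refine Filter.Tendsto.log ?_ (by simp)
      refine Filter.Tendsto.add_const _ (Filter.Tendsto.const_mul _ ?_)
      exact (Filter.tendsto_pow_atTop (by norm_num)).inv_tendsto_atTop
    refine h1.congr' ?_
    filter_upwards [Filter.eventually_gt_atTop 0] with t ht
    have h2 : ∀ i j, c i * c j * Real.log ((x i - x j) ^ 2 * (t ^ 2)⁻¹ + 1) =
        c i * c j * Real.log ((x i - x j) ^ 2 + t ^ 2) - c i * c j * Real.log (t ^ 2) := by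
      intro i j
      rw [← mul_sub, ← Real.log_div (by positivity) (by positivity), add_div,
        div_self (by positivity), div_eq_mul_inv]
    simp only [h2, Finset.sum_sub_distrib, hφ]
    have h3 : ∑ i, ∑ j, c i * c j * Real.log (t ^ 2) = 0 := by
      simp only [← Finset.sum_mul, ← Finset.mul_sum, hc]; simp
    rw [h3, sub_zero]
  refine ge_of_tendsto hlim ?_
  filter_upwards [Filter.eventually_ge_atTop s] with t ht
  exact hmono hs (hs.trans_le ht) ht

/-- Conditional negative definiteness for the signed measure `∑ δ_{x i} - ∑ δ_{y i}`. -/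
lemma log_kernel_two_samples {n : ℕ} (x y : Fin n → ℝ) (s : ℝ) (hs : 0 < s) :
    ∑ i, ∑ j, Real.log ((x i - x j) ^ 2 + s ^ 2) + ∑ i, ∑ j, Real.log ((y i - y j) ^ 2 + s ^ 2) ≤
      2 * ∑ i, ∑ j, Real.log ((x i - y j) ^ 2 + s ^ 2) := by
  have h := log_kernel_condNegDef (ι := Fin n ⊕ Fin n)
    (Sum.elim (fun _ => 1) (fun _ => -1)) (Sum.elim x y) (by simp) s hs
  simp only [Fintype.sum_sum_type, Sum.elim_inl, Sum.elim_inr, Finset.sum_add_distrib] at h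
  simp only [mul_one, one_mul, mul_neg, neg_neg, neg_mul, Finset.sum_neg_distrib] at h
  have hsymm : ∑ i, ∑ j, Real.log ((y i - x j) ^ 2 + s ^ 2) =
      ∑ i, ∑ j, Real.log ((x i - y j) ^ 2 + s ^ 2) := by
    rw [Finset.sum_comm]
    refine Finset.sum_congr rfl fun i _ => Finset.sum_congr rfl fun j _ => ?_
    rw [← neg_sub, neg_sq]
  rw [hsymm] at h
  linarith

/-! ### The weight, its marginals and the mean energy -/

lemma betaWeight_nonneg (β : ℝ) (V : ℝ → ℝ) (n : ℕ) (Λ : Fin n → ℝ) :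
    0 ≤ betaWeight β V n Λ := by
  unfold betaWeight; positivity

lemma betaWeight_continuous (β : ℝ) (hβ : 0 < β) (V : ℝ → ℝ) (hV : Continuous V) (n : ℕ) :
    Continuous (betaWeight β V n) := by
  unfold betaWeight
  refine Continuous.mul (by fun_prop) ?_
  refine continuous_finsetProd _ fun i _ => continuous_finsetProd _ fun j _ => ?_
  exact Continuous.rpow_const (by fun_prop) (fun _ => Or.inr hβ.le)

lemma betaWeight_eq_vandermonde (β : ℝ) (V : ℝ → ℝ) (n : ℕ) (Λ : Fin n → ℝ) :
    betaWeight β V n Λ = (∏ i, Real.exp (-((n : ℝ) * β * V (Λ i)) / 2)) *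
      |(Matrix.vandermonde Λ).det| ^ β := by
  unfold betaWeight
  rw [Matrix.det_vandermonde, Finset.abs_prod, ← Real.finsetProd_rpow _ _ (by simp)]
  congr 1
  refine Finset.prod_congr rfl fun i _ => ?_
  rw [Finset.abs_prod, ← Real.finsetProd_rpow _ _ (by simp)]
  refine Finset.prod_congr rfl fun j _ => ?_
  rw [abs_sub_comm]

lemma betaWeight_perm (β : ℝ) (V : ℝ → ℝ) (n : ℕ) (Λ : Fin n → ℝ) (σ : Equiv.Perm (Fin n)) :
    betaWeight β V n (Λ ∘ σ) = betaWeight β V n Λ := by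
  rw [betaWeight_eq_vandermonde, betaWeight_eq_vandermonde]
  have h1 : Matrix.vandermonde (Λ ∘ σ) = (Matrix.vandermonde Λ).submatrix σ id := by
    ext i j; simp [Matrix.vandermonde]
  rw [h1, Matrix.det_permute, abs_mul]
  congr 1
  · exact Equiv.prod_comp σ (fun i => Real.exp (-((n : ℝ) * β * V (Λ i)) / 2))
  · rcases Int.units_eq_one_or (Equiv.Perm.sign σ) with h | h <;> simp [h]

lemma betaWeight_cons (β : ℝ) (V : ℝ → ℝ) (k : ℕ) (l : ℝ) (y : Fin (k + 1) → ℝ) :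
    betaWeight β V (k + 2) (Fin.cons l y) =
      (Real.exp (-((k + 2 : ℝ) * β * V l) / 2) * ∏ j, |l - y j| ^ β) *
      ((∏ i, Real.exp (-((k + 2 : ℝ) * β * V (y i)) / 2)) *
        ∏ i, ∏ j ∈ Finset.Ioi i, |y i - y j| ^ β) := by
  unfold betaWeight
  rw [Fin.prod_univ_succ, Fin.prod_univ_succ (fun i => ∏ j ∈ Finset.Ioi i, _), Fin.prod_Ioi_zero]
  simp only [Fin.prod_Ioi_succ, Fin.cons_zero, Fin.cons_succ]
  push_cast
  ring

/-- The logarithm of the weight. Since `Real.log 0 = 0`, the terms `i = j` of the double sum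
contribute nothing. -/
noncomputable def gasLog (β : ℝ) (V : ℝ → ℝ) (n : ℕ) (Λ : Fin n → ℝ) : ℝ :=
  -((n : ℝ) * β / 2) * ∑ i, V (Λ i) + β / 2 * ∑ i, ∑ j, Real.log |Λ i - Λ j|

lemma betaWeight_of_injective (β : ℝ) (V : ℝ → ℝ) (n : ℕ) (Λ : Fin n → ℝ)
    (h : Function.Injective Λ) : betaWeight β V n Λ = Real.exp (gasLog β V n Λ) := by
  have h1 : ∑ i, ∑ j, Real.log |Λ i - Λ j| = 2 * ∑ i, ∑ j ∈ Finset.Ioi i, Real.log |Λ i - Λ j| := by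
    have h2 := Finset.sum_sum_Ioi_add_eq_sum_sum_off_diag (fun i j => Real.log |Λ i - Λ j|)
    have h3 : ∑ i, ∑ j, Real.log |Λ i - Λ j| = ∑ i, ∑ j ∈ {i}ᶜ, Real.log |Λ j - Λ i| := by
      refine Finset.sum_congr rfl fun i _ => ?_
      rw [← Finset.sum_add_sum_compl {i}]
      simp [abs_sub_comm]
    rw [h3, ← h2, Finset.mul_sum]
    refine Finset.sum_congr rfl fun i _ => ?_
    rw [Finset.mul_sum]
    refine Finset.sum_congr rfl fun j _ => ?_
    rw [abs_sub_comm (Λ j)]; ring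
  unfold betaWeight gasLog
  rw [h1, Real.exp_add, ← Real.exp_sum]
  congr 1
  · congr 1
    rw [Finset.mul_sum]
    refine Finset.sum_congr rfl fun i _ => ?_
    ring
  · rw [show β / 2 * (2 * ∑ i, ∑ j ∈ Finset.Ioi i, Real.log |Λ i - Λ j|) =
      ∑ i, ∑ j ∈ Finset.Ioi i, Real.log |Λ i - Λ j| * β by
        simp only [← Finset.sum_mul]; ring]
    rw [Real.exp_sum]
    refine Finset.prod_congr rfl fun i _ => ?_
    rw [Real.exp_sum]
    refine Finset.prod_congr rfl fun j hj => ?_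
    rw [Real.rpow_def_of_pos]
    rw [abs_pos, sub_ne_zero]
    exact fun h' => (Finset.mem_Ioi.1 hj).ne (h h')

lemma betaWeight_of_not_injective (β : ℝ) (hβ : 0 < β) (V : ℝ → ℝ) (n : ℕ) (Λ : Fin n → ℝ)
    (h : ¬ Function.Injective Λ) : betaWeight β V n Λ = 0 := by
  rw [betaWeight_eq_vandermonde]
  have : (Matrix.vandermonde Λ).det = 0 := by
    by_contra h0; exact h (Matrix.det_vandermonde_ne_zero_iff.1 h0)
  rw [this, abs_zero, Real.zero_rpow hβ.ne', mul_zero]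

lemma integrableOn_cube {n : ℕ} {f : (Fin n → ℝ) → ℝ} (hf : Continuous f) (A B : ℝ) :
    IntegrableOn f (Set.univ.pi (fun _ : Fin n => Set.Icc A B)) :=
  hf.continuousOn.integrableOn_compact (isCompact_univ_pi fun _ => isCompact_Icc)

lemma integral_cube_cons {n : ℕ} {f : (Fin (n + 1) → ℝ) → ℝ} (hf : Continuous f) (A B : ℝ) :
    ∫ Λ in Set.univ.pi (fun _ : Fin (n + 1) => Set.Icc A B), f Λ =
      ∫ x in Set.Icc A B, ∫ y in Set.univ.pi (fun _ : Fin n => Set.Icc A B), f (Fin.cons x y) := by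
  have hmp := (volume_preserving_piFinSuccAbove (fun _ : Fin (n + 1) => ℝ) 0).symm
  have hemb := (MeasurableEquiv.piFinSuccAbove (fun _ : Fin (n + 1) => ℝ) 0).symm.measurableEmbedding
  rw [← hmp.setIntegral_preimage_emb hemb]
  have hpre : (MeasurableEquiv.piFinSuccAbove (fun _ : Fin (n + 1) => ℝ) 0).symm ⁻¹'
      (Set.univ.pi (fun _ : Fin (n + 1) => Set.Icc A B)) =
      Set.Icc A B ×ˢ Set.univ.pi (fun _ : Fin n => Set.Icc A B) := by
    ext ⟨x, y⟩
    simp only [Set.mem_preimage, Set.mem_pi, Set.mem_univ, true_imp_iff, Set.mem_prod]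
    rw [Fin.forall_fin_succ]
    simp [MeasurableEquiv.piFinSuccAbove, Fin.insertNthEquiv]
  have hc : Continuous fun p : ℝ × (Fin n → ℝ) => f (Fin.cons p.1 p.2) :=
    hf.comp (Continuous.finCons continuous_fst continuous_snd)
  have he : ∀ p : ℝ × (Fin n → ℝ),
      f ((MeasurableEquiv.piFinSuccAbove (fun _ : Fin (n + 1) => ℝ) 0).symm p) =
        f (Fin.cons p.1 p.2) := by
    intro p; simp [MeasurableEquiv.piFinSuccAbove, Fin.insertNthEquiv]
  rw [hpre]
  simp only [he]
  exact setIntegral_prod (μ := volume) (ν := volume) _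
    (hc.continuousOn.integrableOn_compact
      (isCompact_Icc.prod (isCompact_univ_pi fun _ => isCompact_Icc)))

lemma integral_cube_perm {n : ℕ} (f : (Fin n → ℝ) → ℝ) (A B : ℝ) (σ : Equiv.Perm (Fin n)) :
    ∫ Λ in Set.univ.pi (fun _ : Fin n => Set.Icc A B), f (Λ ∘ σ) =
      ∫ Λ in Set.univ.pi (fun _ : Fin n => Set.Icc A B), f Λ := by
  have hmp := volume_measurePreserving_piCongrLeft (fun _ : Fin n => ℝ) σ.symm
  have hemb := (MeasurableEquiv.piCongrLeft (fun _ : Fin n => ℝ) σ.symm).measurableEmbedding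
  have he : ∀ Λ : Fin n → ℝ, MeasurableEquiv.piCongrLeft (fun _ : Fin n => ℝ) σ.symm Λ = Λ ∘ σ := by
    intro Λ; ext i
    have := MeasurableEquiv.piCongrLeft_apply_apply (β := fun _ : Fin n => ℝ) σ.symm Λ (σ i)
    simpa using this
  have := hmp.setIntegral_preimage_emb hemb f (Set.univ.pi (fun _ : Fin n => Set.Icc A B))
  simp only [he] at this
  rw [← this]
  congr 2
  ext Λ
  simp only [Set.mem_preimage, he, Set.mem_pi, Set.mem_univ, true_imp_iff, Function.comp]
  exact ⟨fun h i => h (σ i), fun h i => by simpa using h (σ.symm i)⟩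

lemma resP1_continuous (β : ℝ) (hβ : 0 < β) (V : ℝ → ℝ) (hV : Continuous V) (A B : ℝ) (k : ℕ) :
    Continuous (resP1 β V A B k) := by
  unfold resP1
  refine Continuous.const_mul ?_ _
  refine continuous_parametric_integral_of_continuous ?_ (isCompact_univ_pi fun _ => isCompact_Icc)
  exact (betaWeight_continuous β hβ V hV (k + 2)).comp
    (Continuous.finCons continuous_fst continuous_snd)

/-- Since the weight is symmetric, every coordinate has the marginal density `resP1`. -/
lemma marginal_integral (β : ℝ) (hβ : 0 < β) (V : ℝ → ℝ) (hV : Continuous V) (A B : ℝ) (k : ℕ)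
    (hZ : resZ β V A B (k + 2) ≠ 0) (g : ℝ → ℝ) (hg : Continuous g) (i : Fin (k + 2)) :
    ∫ Λ in Set.univ.pi (fun _ : Fin (k + 2) => Set.Icc A B),
        g (Λ i) * betaWeight β V (k + 2) Λ =
      resZ β V A B (k + 2) * ∫ x in Set.Icc A B, g x * resP1 β V A B k x := by
  have h1 := integral_cube_perm (fun Λ => g (Λ 0) * betaWeight β V (k + 2) Λ) A B (Equiv.swap 0 i)
  simp only [betaWeight_perm, Function.comp, Equiv.swap_apply_left] at h1
  have hc : Continuous fun Λ : Fin (k + 2) → ℝ => g (Λ 0) * betaWeight β V (k + 2) Λ :=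
    (hg.comp (continuous_apply 0)).mul (betaWeight_continuous β hβ V hV _)
  rw [h1, integral_cube_cons hc, ← integral_const_mul]
  refine integral_congr_ae (Filter.Eventually.of_forall fun x => ?_)
  simp only [Fin.cons_zero, integral_const_mul, resP1]
  field_simp

/-- The mean regularized energy of the `n` points is at most `n²` times the regularized energy of the
one-point density. This integrates the two-sample inequality against two independent copies of the
ensemble, so no information on the two-point function is needed. -/
lemma energy_le_marginal (β : ℝ) (hβ : 0 < β) (V : ℝ → ℝ) (hV : Continuous V) (A B : ℝ) (k : ℕ)
    (hZ : 0 < resZ β V A B (k + 2)) (s : ℝ) (hs : 0 < s) :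
    ∫ Λ in Set.univ.pi (fun _ : Fin (k + 2) => Set.Icc A B),
        (∑ i, ∑ j, Real.log ((Λ i - Λ j) ^ 2 + s ^ 2)) * betaWeight β V (k + 2) Λ ≤
      resZ β V A B (k + 2) * (k + 2 : ℝ) ^ 2 *
        ∫ x in Set.Icc A B, ∫ y in Set.Icc A B,
          Real.log ((x - y) ^ 2 + s ^ 2) * (resP1 β V A B k x * resP1 β V A B k y) := by
  set w := betaWeight β V (k + 2) with hw
  set Z := resZ β V A B (k + 2) with hZdef
  set p := resP1 β V A B k with hp
  set Q := Set.univ.pi (fun _ : Fin (k + 2) => Set.Icc A B) with hQ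
  have hwc : Continuous w := betaWeight_continuous β hβ V hV _
  have hpc : Continuous p := resP1_continuous β hβ V hV A B k
  have hG : Continuous fun t : ℝ => Real.log (t ^ 2 + s ^ 2) := by
    refine Continuous.log (by fun_prop) fun t => ?_
    positivity
  set G : ℝ → ℝ := fun t => Real.log (t ^ 2 + s ^ 2) with hGdef
  set g : ℝ → ℝ := fun x => ∫ y in Set.Icc A B, G (x - y) * p y with hg
  have hgc : Continuous g :=
    continuous_parametric_integral_of_continuous
      (f := fun x y => G (x - y) * p y)
      (by
        have h1 : Continuous fun q : ℝ × ℝ => G (q.1 - q.2) := hG.comp (by fun_prop)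
        exact h1.mul (hpc.comp continuous_snd)) isCompact_Icc
  have hSc : Continuous fun Λ : Fin (k + 2) → ℝ => ∑ i, ∑ j, G (Λ i - Λ j) :=
    continuous_finsetSum _ fun i _ => continuous_finsetSum _ fun j _ => hG.comp (by fun_prop)
  set S : (Fin (k + 2) → ℝ) → ℝ := fun Λ => ∑ i, ∑ j, G (Λ i - Λ j) with hS
  set T := ∫ Λ in Q, S Λ * w Λ with hT
  have hZint : ∫ Λ in Q, w Λ = Z := rfl
  have hQm : MeasurableSet Q := MeasurableSet.univ_pi fun _ => measurableSet_Icc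
  -- Averaging the two-sample inequality over the second sample.
  have step1 : ∀ Λ, S Λ * Z + T ≤ 2 * (k + 2 : ℝ) * Z * ∑ i, g (Λ i) := by
    intro Λ
    have hi1 : IntegrableOn (fun Λ' => S Λ * w Λ' + S Λ' * w Λ') Q :=
      integrableOn_cube (by fun_prop) A B
    have hcross : ∀ i j : Fin (k + 2),
        IntegrableOn (fun Λ' : Fin (k + 2) → ℝ => G (Λ i - Λ' j) * w Λ') Q := fun i j =>
      integrableOn_cube ((hG.comp (by fun_prop)).mul hwc) A B
    have hi2 : IntegrableOn (fun Λ' : Fin (k + 2) → ℝ => 2 * ∑ i, ∑ j, G (Λ i - Λ' j) * w Λ') Q :=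
      (integrable_finsetSum _ fun i _ => integrable_finsetSum _ fun j _ => hcross i j).const_mul _
    have h := setIntegral_mono_on hi1 hi2 hQm (fun Λ' _ => by
      have := mul_le_mul_of_nonneg_right (log_kernel_two_samples Λ Λ' s hs)
        (betaWeight_nonneg β V (k + 2) Λ')
      simp only [← Finset.sum_mul]
      simp only [hS, hGdef, hw]
      linarith)
    rw [integral_add (integrableOn_cube (by fun_prop) A B) (integrableOn_cube (by fun_prop) A B),
      integral_const_mul, hZint, integral_const_mul,
      integral_finsetSum _ (fun i _ => integrable_finsetSum _ fun j _ => hcross i j)] at h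
    refine h.trans (le_of_eq ?_)
    have h3 : ∀ i, ∫ Λ' in Q, ∑ j, G (Λ i - Λ' j) * w Λ' = (k + 2 : ℝ) * (Z * g (Λ i)) := by
      intro i
      rw [integral_finsetSum _ (fun j _ => hcross i j)]
      have : ∀ j, ∫ Λ' in Q, G (Λ i - Λ' j) * w Λ' = Z * g (Λ i) := fun j =>
        marginal_integral β hβ V hV A B k hZ.ne' (fun t => G (Λ i - t)) (hG.comp (by fun_prop)) j
      simp only [this, Finset.sum_const, Finset.card_univ, Fintype.card_fin, nsmul_eq_mul]
      push_cast; ring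
    simp only [h3, ← Finset.mul_sum]
    ring
  have hgi : ∀ i : Fin (k + 2), IntegrableOn (fun Λ : Fin (k + 2) → ℝ => g (Λ i) * w Λ) Q :=
    fun i => integrableOn_cube ((hgc.comp (continuous_apply i)).mul hwc) A B
  have step2 := setIntegral_mono_on
    (f := fun Λ => Z * (S Λ * w Λ) + T * w Λ)
    (g := fun Λ => 2 * (k + 2 : ℝ) * Z * ∑ i, g (Λ i) * w Λ) (s := Q) (μ := volume)
    (integrableOn_cube (by fun_prop) A B)
    ((integrable_finsetSum _ fun i _ => hgi i).const_mul _) hQm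
    (fun Λ _ => by
      have := mul_le_mul_of_nonneg_right (step1 Λ) (betaWeight_nonneg β V (k + 2) Λ)
      simp only [← Finset.sum_mul]
      simp only [← hw] at this
      linarith)
  rw [integral_add (integrableOn_cube (by fun_prop) A B) (integrableOn_cube (by fun_prop) A B),
    integral_const_mul, integral_const_mul, integral_const_mul, hZint,
    integral_finsetSum _ (fun i _ => hgi i)] at step2
  have h4 : ∀ i, ∫ Λ in Q, g (Λ i) * w Λ = Z * ∫ x in Set.Icc A B, g x * p x := fun i =>
    marginal_integral β hβ V hV A B k hZ.ne' g hgc i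
  simp only [h4, Finset.sum_const, Finset.card_univ, Fintype.card_fin, nsmul_eq_mul] at step2
  have h5 : ∫ x in Set.Icc A B, ∫ y in Set.Icc A B, G (x - y) * (p x * p y) =
      ∫ x in Set.Icc A B, g x * p x := by
    refine integral_congr_ae (Filter.Eventually.of_forall fun x => ?_)
    simp only [hg, ← integral_mul_const]
    refine integral_congr_ae (Filter.Eventually.of_forall fun y => ?_)
    ring
  rw [h5]
  push_cast at step2
  have h6 : Z * (2 * T) ≤ Z * (2 * (Z * (k + 2 : ℝ) ^ 2 * ∫ x in Set.Icc A B, g x * p x)) := by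
    calc _ = Z * T + T * Z := by ring
      _ ≤ _ := step2
      _ = _ := by ring
  have := le_of_mul_le_mul_left h6 hZ
  linarith

/-! ### Singular kernels and the lower bound for the partition function -/

lemma integrable_diff_kernel (h : ℝ → ℝ) (A B : ℝ)
    (hh : IntegrableOn h (Set.Icc (A - B) (B - A))) :
    Integrable (fun q : ℝ × ℝ => h (q.1 - q.2))
      ((volume.restrict (Set.Icc A B)).prod (volume.restrict (Set.Icc A B))) := by
  have h1 : Integrable ((Set.Icc A B).indicator fun _ : ℝ => (1 : ℝ)) :=
    (integrable_indicator_iff measurableSet_Icc).2 (by simp)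
  have h2 : Integrable ((Set.Icc (A - B) (B - A)).indicator h) :=
    (integrable_indicator_iff measurableSet_Icc).2 hh
  have h3 := h1.convolution_integrand (ContinuousLinearMap.mul ℝ ℝ) h2
  rw [Measure.prod_restrict]
  refine (h3.integrableOn (s := Set.Icc A B ×ˢ Set.Icc A B)).congr_fun ?_
    (measurableSet_Icc.prod measurableSet_Icc)
  rintro ⟨x, y⟩ ⟨hx, hy⟩
  have hxy : x - y ∈ Set.Icc (A - B) (B - A) := by
    simp only [Set.mem_Icc] at hx hy ⊢
    constructor <;> linarith
  simp [Set.indicator_of_mem hxy, Set.indicator_of_mem hy]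

lemma integrable_log_kernel (A B : ℝ) :
    Integrable (fun q : ℝ × ℝ => Real.log |q.1 - q.2|)
      ((volume.restrict (Set.Icc A B)).prod (volume.restrict (Set.Icc A B))) := by
  refine integrable_diff_kernel (fun t => Real.log |t|) A B ?_
  simp only [Real.log_abs]
  rcases le_total (A - B) (B - A) with h | h
  · exact (intervalIntegrable_iff_integrableOn_Icc_of_le h).1
      intervalIntegral.intervalIntegrable_log'
  · rcases h.eq_or_lt with h | h
    · rw [h]; simp
    · rw [Set.Icc_eq_empty (by linarith)]; simp

lemma integrable_invsqrt_kernel (A B : ℝ) (hAB : A ≤ B) :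
    Integrable (fun q : ℝ × ℝ => |q.1 - q.2| ^ (-(1 / 2) : ℝ))
      ((volume.restrict (Set.Icc A B)).prod (volume.restrict (Set.Icc A B))) := by
  refine integrable_diff_kernel (fun t => |t| ^ (-(1 / 2) : ℝ)) A B ?_
  have h0 : IntervalIntegrable (fun t : ℝ => |t| ^ (-(1 / 2) : ℝ)) volume 0 (B - A) := by
    refine (intervalIntegral.intervalIntegrable_rpow' (r := -(1 / 2)) (by norm_num)).congr ?_
    intro t ht
    rw [Set.uIoc_of_le (by linarith)] at ht
    simp only [abs_of_pos ht.1]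
  have h1 : IntervalIntegrable (fun t : ℝ => |t| ^ (-(1 / 2) : ℝ)) volume (A - B) 0 := by
    have := (IntervalIntegrable.iff_comp_neg (f := fun t : ℝ => |t| ^ (-(1 / 2) : ℝ))
      (a := 0) (b := B - A)).1 h0
    simpa using this.symm
  exact (intervalIntegrable_iff_integrableOn_Icc_of_le (by linarith)).1 (h1.trans h0)

lemma pi_mono_measure {n : ℕ} (μ ν : Measure ℝ) [SigmaFinite μ] [SigmaFinite ν] (h : μ ≤ ν) :
    Measure.pi (fun _ : Fin n => μ) ≤ Measure.pi (fun _ : Fin n => ν) := by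
  rw [Measure.le_iff]
  intro t ht
  have h1 : (Measure.pi (fun _ : Fin n => μ)).toOuterMeasure ≤
      OuterMeasure.pi (fun _ : Fin n => ν.toOuterMeasure) := by
    rw [OuterMeasure.le_pi]
    intro s _
    change Measure.pi (fun _ : Fin n => μ) _ ≤ _
    rw [Measure.pi_pi]
    exact Finset.prod_le_prod' fun i _ => h _
  refine (h1 t).trans (le_of_eq ?_)
  rw [Measure.pi_def, toMeasure_apply _ _ ht]

lemma ae_injective (n : ℕ) : ∀ᵐ Λ : Fin n → ℝ, Function.Injective Λ := by
  have h : ∀ i j : Fin n, i ≠ j → ∀ᵐ Λ : Fin n → ℝ, Λ i ≠ Λ j := by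
    intro i j hij
    have hs := Measure.addHaar_submodule (volume : Measure (Fin n → ℝ))
      (LinearMap.ker ((LinearMap.proj i : (Fin n → ℝ) →ₗ[ℝ] ℝ) - LinearMap.proj j)) (by
        intro htop
        have : (Pi.single i 1 : Fin n → ℝ) ∈
            LinearMap.ker ((LinearMap.proj i : (Fin n → ℝ) →ₗ[ℝ] ℝ) - LinearMap.proj j) := by
          rw [htop]; trivial
        simp [hij.symm] at this)
    rw [ae_iff]
    convert hs using 2
    ext Λ
    simp [sub_eq_zero]
  have h' : ∀ᵐ Λ : Fin n → ℝ, ∀ i j : Fin n, i ≠ j → Λ i ≠ Λ j := by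
    rw [ae_all_iff]; intro i
    rw [ae_all_iff]; intro j
    by_cases hij : i = j
    · simp [hij]
    · filter_upwards [h i j hij] with Λ hΛ _ using hΛ
  filter_upwards [h'] with Λ hΛ i j hij
  by_contra hne
  exact hΛ i j hne hij

/-- The lower half of the Gibbs variational principle: for a probability measure `ν` with density at
most `M`, the cube integral of the weight is at least `M⁻ⁿ` times its mean under `ν^{⊗n}`, and
Jensen's inequality bounds that mean from below. -/
lemma partition_lower (β : ℝ) (hβ : 0 < β) (V : ℝ → ℝ) (hV : Continuous V) (A B : ℝ) (n : ℕ)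
    (ν : Measure ℝ) [IsProbabilityMeasure ν] (M : ℝ) (hM : 0 < M)
    (hν : ν ≤ ENNReal.ofReal M • volume.restrict (Set.Icc A B)) :
    Real.exp (-((n : ℝ) ^ 2 * β / 2) * (∫ x, V x ∂ν) +
      β / 2 * (n * (n - 1)) * (∫ q, Real.log |q.1 - q.2| ∂(ν.prod ν)) - n * Real.log M)
      ≤ resZ β V A B n := by
  set τ := volume.restrict (Set.Icc A B) with hτ
  set π := Measure.pi (fun _ : Fin n => ν) with hπ
  have hVint : Integrable V ν := by
    refine Integrable.mono_measure ?_ hν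
    exact (hV.continuousOn.integrableOn_Icc (a := A) (b := B)).smul_measure ENNReal.ofReal_ne_top
  have hLint : Integrable (fun q : ℝ × ℝ => Real.log |q.1 - q.2|) (ν.prod ν) := by
    refine Integrable.mono_measure ?_ (Measure.prod_mono hν hν)
    rw [Measure.prod_smul_left, Measure.prod_smul_right]
    exact ((integrable_log_kernel A B).smul_measure ENNReal.ofReal_ne_top).smul_measure
      ENNReal.ofReal_ne_top
  -- The product measure is dominated by Lebesgue measure on the cube.
  have hπle : π ≤ ENNReal.ofReal (M ^ n) •
      (volume.restrict (Set.univ.pi (fun _ : Fin n => Set.Icc A B))) := by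
    have : IsFiniteMeasure (ENNReal.ofReal M • τ) := Measure.smul_finite τ ENNReal.ofReal_ne_top
    refine (pi_mono_measure ν _ hν).trans (le_of_eq ?_)
    have hvol : (volume : Measure (Fin n → ℝ)).restrict
        (Set.univ.pi (fun _ : Fin n => Set.Icc A B)) = Measure.pi (fun _ : Fin n => τ) := by
      rw [volume_pi, Measure.restrict_pi_pi]
    rw [hvol]
    refine Measure.pi_eq fun s _ => ?_
    simp only [Measure.smul_apply, smul_eq_mul, Measure.pi_pi, Finset.prod_mul_distrib,
      Finset.prod_const, Finset.card_univ, Fintype.card_fin]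
    rw [ENNReal.ofReal_pow hM.le]
  have hac : π ≪ (volume : Measure (Fin n → ℝ)) :=
    (Measure.absolutelyContinuous_of_le hπle).trans
      ((Measure.smul_absolutelyContinuous).trans Measure.absolutelyContinuous_restrict)
  have hinj : ∀ᵐ Λ ∂π, Function.Injective Λ := hac.ae_le (ae_injective n)
  have hpair : ∀ i j : Fin n, i ≠ j →
      MeasurePreserving (fun Λ : Fin n → ℝ => (Λ i, Λ j)) π (ν.prod ν) := by
    intro i j hij
    refine ⟨by fun_prop, ?_⟩
    have h1 : ProbabilityTheory.IndepFun (fun ω : Fin n → ℝ => ω i) (fun ω => ω j)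
        (Measure.pi fun _ : Fin n => ν) :=
      (ProbabilityTheory.iIndepFun_pi (μ := fun _ : Fin n => ν)
        (X := fun _ => (id : ℝ → ℝ)) (fun _ => aemeasurable_id)).indepFun hij
    rw [ProbabilityTheory.indepFun_iff_map_prod_eq_prod_map_map
      (measurable_pi_apply i).aemeasurable (measurable_pi_apply j).aemeasurable] at h1
    have h2 : ∀ i : Fin n, Measure.map (fun ω : Fin n → ℝ => ω i) π = ν := fun i =>
      (measurePreserving_eval (fun _ : Fin n => ν) i).map_eq
    rw [h1, h2, h2]
  have hmeas : Measurable fun q : ℝ × ℝ => Real.log |q.1 - q.2| := by fun_prop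
  have hpi : ∀ i j : Fin n, Integrable (fun Λ : Fin n → ℝ => Real.log |Λ i - Λ j|) π := by
    intro i j
    by_cases hij : i = j
    · simp [hij]
    · exact (hpair i j hij).integrable_comp_of_integrable hLint
  have hVi : ∀ i : Fin n, Integrable (fun Λ : Fin n → ℝ => V (Λ i)) π := fun i =>
    (measurePreserving_eval (fun _ : Fin n => ν) i).integrable_comp_of_integrable hVint
  set J := ∫ q, Real.log |q.1 - q.2| ∂(ν.prod ν) with hJ
  have hval : ∀ i j : Fin n, ∫ Λ, Real.log |Λ i - Λ j| ∂π = if i = j then 0 else J := by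
    intro i j
    split_ifs with hij
    · simp [hij]
    · have := integral_map (μ := π) (φ := fun Λ : Fin n → ℝ => (Λ i, Λ j)) (by fun_prop)
        (f := fun q : ℝ × ℝ => Real.log |q.1 - q.2|) hmeas.aestronglyMeasurable
      rw [(hpair i j hij).map_eq] at this
      exact this.symm
  have hVval : ∀ i : Fin n, ∫ Λ, V (Λ i) ∂π = ∫ x, V x ∂ν := by
    intro i
    have := integral_map (μ := π) (φ := fun Λ : Fin n → ℝ => Λ i)
      (measurable_pi_apply i).aemeasurable
      (f := V) hV.aestronglyMeasurable
    rw [(measurePreserving_eval (fun _ : Fin n => ν) i).map_eq] at this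
    exact this.symm
  set a := -((n : ℝ) ^ 2 * β / 2) * (∫ x, V x ∂ν) + β / 2 * (n * (n - 1)) * J with ha
  have hgi1 : Integrable (fun Λ : Fin n → ℝ => -((n : ℝ) * β / 2) * ∑ i, V (Λ i)) π :=
    (integrable_finsetSum _ fun i _ => hVi i).const_mul _
  have hgi2 : Integrable (fun Λ : Fin n → ℝ => β / 2 * ∑ i, ∑ j, Real.log |Λ i - Λ j|) π :=
    (integrable_finsetSum _ fun i _ => integrable_finsetSum _ fun j _ => hpi i j).const_mul _
  have hgi : Integrable (gasLog β V n) π := hgi1.add hgi2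
  have hga : ∫ Λ, gasLog β V n Λ ∂π = a := by
    unfold gasLog
    rw [integral_add hgi1 hgi2, integral_const_mul, integral_const_mul,
      integral_finsetSum _ (fun i _ => hVi i),
      integral_finsetSum _ (fun i _ => integrable_finsetSum _ fun j _ => hpi i j)]
    have h5 : ∀ i : Fin n, ∫ Λ, ∑ j, Real.log |Λ i - Λ j| ∂π = (n - 1) * J := by
      intro i
      rw [integral_finsetSum _ (fun j _ => hpi i j)]
      simp only [hval]
      have : ∀ j, (if i = j then 0 else J) = J - (if i = j then J else 0) := by
        intro j; split_ifs <;> simp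
      simp only [this, Finset.sum_sub_distrib, Finset.sum_ite_eq, Finset.mem_univ, if_true,
        Finset.sum_const, Finset.card_univ, Fintype.card_fin, nsmul_eq_mul]
      ring
    simp only [h5, hVval, Finset.sum_const, Finset.card_univ, Fintype.card_fin, nsmul_eq_mul]
    rw [ha]; ring
  have hwi0 : Integrable (betaWeight β V n) (ENNReal.ofReal (M ^ n) •
      (volume.restrict (Set.univ.pi (fun _ : Fin n => Set.Icc A B)))) :=
    (integrableOn_cube (betaWeight_continuous β hβ V hV n) A B).smul_measure ENNReal.ofReal_ne_top
  have hwi : Integrable (betaWeight β V n) π := hwi0.mono_measure hπle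
  -- Jensen's inequality, through the tangent line of `exp` at the mean `a`.
  have hjensen : Real.exp a ≤ ∫ Λ, betaWeight β V n Λ ∂π := by
    have hsub : Integrable (fun Λ => gasLog β V n Λ - a) π := hgi.sub (integrable_const a)
    have h6 : ∫ Λ, Real.exp a * (1 + (gasLog β V n Λ - a)) ∂π ≤ ∫ Λ, betaWeight β V n Λ ∂π := by
      refine integral_mono_ae ?_ hwi ?_
      · exact ((integrable_const (1 : ℝ)).add hsub).const_mul _
      · filter_upwards [hinj] with Λ hΛ
        rw [betaWeight_of_injective β V n Λ hΛ]
        have := Real.add_one_le_exp (gasLog β V n Λ - a)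
        calc _ ≤ Real.exp a * Real.exp (gasLog β V n Λ - a) := by gcongr; linarith
          _ = _ := by rw [← Real.exp_add]; ring_nf
    rw [integral_const_mul, integral_add (integrable_const _) hsub,
      integral_sub hgi (integrable_const a), hga] at h6
    simpa using h6
  have hmono := integral_mono_measure hπle
    (Filter.Eventually.of_forall (betaWeight_nonneg β V n)) hwi0
  rw [integral_smul_measure, ENNReal.toReal_ofReal (by positivity)] at hmono
  rw [Real.exp_sub, mul_comm (n : ℝ), ← Real.rpow_def_of_pos hM, Real.rpow_natCast,
    div_le_iff₀ (by positivity), mul_comm]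
  exact hjensen.trans hmono

/-! ### The one-point density and the upper bound for the partition function -/

lemma resP1_nonneg (β : ℝ) (V : ℝ → ℝ) (A B : ℝ) (k : ℕ) (l : ℝ) : 0 ≤ resP1 β V A B k l := by
  unfold resP1 resZ
  exact mul_nonneg (inv_nonneg.2 (integral_nonneg fun _ => betaWeight_nonneg _ _ _ _))
    (integral_nonneg fun _ => betaWeight_nonneg _ _ _ _)

lemma resP1_integral (β : ℝ) (hβ : 0 < β) (V : ℝ → ℝ) (hV : Continuous V) (A B : ℝ) (k : ℕ)
    (hZ : 0 < resZ β V A B (k + 2)) : ∫ x in Set.Icc A B, resP1 β V A B k x = 1 := by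
  have h := marginal_integral β hβ V hV A B k hZ.ne' (fun _ => 1) continuous_const 0
  simp only [one_mul] at h
  have h2 : resZ β V A B (k + 2) = resZ β V A B (k + 2) * ∫ x in Set.Icc A B, resP1 β V A B k x := h
  exact mul_left_cancel₀ hZ.ne' (by rw [← h2, mul_one])

/-- The one-point density is at most a power of `n = k + 2`: `weight_le_integral` is integrated over
the other points. -/
lemma resP1_le (β : ℝ) (hβ : 0 < β) (V : ℝ → ℝ) (hV : Continuous V) (A B L : ℝ)
    (hAB : 1 ≤ B - A) (hL : 0 ≤ L)
    (hlip : ∀ x ∈ Set.Icc A B, ∀ z ∈ Set.Icc A B, |V x - V z| ≤ L * |x - z|) (k : ℕ)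
    (hZ : 0 < resZ β V A B (k + 2)) (l : ℝ) (hl : l ∈ Set.Icc A B) :
    resP1 β V A B k l ≤ (8 * 2 ^ β * Real.exp (β * L / 2)) * (k + 2 : ℝ) ^ 3 := by
  set K := (8 * 2 ^ β * Real.exp (β * L / 2)) * (k + 2 : ℝ) ^ 3 with hK
  have hwc := betaWeight_continuous β hβ V hV (k + 2)
  have hc2 : Continuous fun q : ℝ × (Fin (k + 1) → ℝ) =>
      betaWeight β V (k + 2) (Fin.cons q.1 q.2) :=
    hwc.comp (Continuous.finCons continuous_fst continuous_snd)
  have hint : Integrable (fun q : ℝ × (Fin (k + 1) → ℝ) =>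
      betaWeight β V (k + 2) (Fin.cons q.1 q.2))
      ((volume.restrict (Set.Icc A B)).prod
        (volume.restrict (Set.univ.pi (fun _ : Fin (k + 1) => Set.Icc A B)))) := by
    rw [Measure.prod_restrict]
    exact hc2.continuousOn.integrableOn_compact
      (isCompact_Icc.prod (isCompact_univ_pi fun _ => isCompact_Icc))
  have hswap := integral_integral_swap
    (f := fun x (y : Fin (k + 1) → ℝ) => betaWeight β V (k + 2) (Fin.cons x y)) hint
  have hZeq : resZ β V A B (k + 2) = _ := (integral_cube_cons hwc A B).trans hswap
  have hmain : ∫ y in Set.univ.pi (fun _ : Fin (k + 1) => Set.Icc A B),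
      betaWeight β V (k + 2) (Fin.cons l y) ≤ K * resZ β V A B (k + 2) := by
    rw [hZeq, ← integral_const_mul]
    refine integral_mono ?_ ?_ ?_
    · exact integrableOn_cube (hc2.comp (by fun_prop : Continuous fun y => (l, y))) A B
    · exact (hint.integral_prod_right).const_mul K
    · intro y
      have h1 := weight_le_integral β hβ V hV A B L hAB hL hlip k y l hl
      simp only [betaWeight_cons, integral_mul_const]
      have hb : 0 ≤ (∏ i, Real.exp (-((k + 2 : ℝ) * β * V (y i)) / 2)) *
          ∏ i, ∏ j ∈ Finset.Ioi i, |y i - y j| ^ β := by positivity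
      have h2 := mul_le_mul_of_nonneg_right h1 hb
      exact h2.trans_eq (mul_assoc _ _ _)
  unfold resP1
  rw [inv_mul_le_iff₀ hZ, mul_comm]
  exact hmain

/-- The upper half of the Gibbs variational principle, with the logarithm regularized at scale `s`:
the entropy of the ensemble is at most that of the uniform distribution on the cube, and its energy
is estimated through the one-point density by `energy_le_marginal`. -/
lemma partition_upper (β : ℝ) (hβ : 0 < β) (V : ℝ → ℝ) (hV : Continuous V) (A B : ℝ) (hAB : A < B)
    (k : ℕ) (hZ : 0 < resZ β V A B (k + 2)) (s : ℝ) (hs : 0 < s) :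
    Real.log (resZ β V A B (k + 2)) - (k + 2 : ℝ) * Real.log (B - A) ≤
      -((k + 2 : ℝ) ^ 2 * β / 2) * (∫ x in Set.Icc A B, V x * resP1 β V A B k x)
      + β / 4 * (k + 2 : ℝ) ^ 2 * (∫ x in Set.Icc A B, ∫ y in Set.Icc A B,
          Real.log ((x - y) ^ 2 + s ^ 2) * (resP1 β V A B k x * resP1 β V A B k y))
      - β / 2 * (k + 2 : ℝ) * Real.log s := by
  set w := betaWeight β V (k + 2) with hw
  set Z := resZ β V A B (k + 2) with hZd
  set Q := Set.univ.pi (fun _ : Fin (k + 2) => Set.Icc A B) with hQ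
  have hwc : Continuous w := betaWeight_continuous β hβ V hV (k + 2)
  have hw0 : ∀ Λ, 0 ≤ w Λ := betaWeight_nonneg β V (k + 2)
  have hl : 0 < B - A := sub_pos.2 hAB
  set a := Z / (B - A) ^ (k + 2) with ha
  have ha0 : 0 < a := by positivity
  have hvol : volume.real Q = (B - A) ^ (k + 2) := by
    rw [hQ, Measure.real, volume_pi, Measure.pi_pi]
    simp [hl.le]
  have hlow : Z * Real.log a ≤ ∫ Λ in Q, w Λ * Real.log (w Λ) := by
    have h1 : ∫ Λ in Q, (w Λ * Real.log a + w Λ - a) = Z * Real.log a := by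
      have i1 : IntegrableOn w Q := integrableOn_cube hwc A B
      have i2 : IntegrableOn (fun _ => a) Q := integrableOn_cube (n := k + 2) continuous_const A B
      have i3 : Integrable (fun Λ => w Λ * Real.log a) (volume.restrict Q) := i1.mul_const _
      have i4 : Integrable (fun Λ => w Λ * Real.log a + w Λ) (volume.restrict Q) := i3.add i1
      rw [integral_sub i4 i2, integral_add i3 i1, integral_mul_const, setIntegral_const, hvol]
      have : ∫ Λ in Q, w Λ = Z := rfl
      rw [this, ha, smul_eq_mul]
      field_simp
      ring
    rw [← h1]
    refine integral_mono (integrableOn_cube (by fun_prop) A B)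
      (integrableOn_cube (Real.continuous_mul_log.comp hwc) A B) fun Λ => ?_
    change w Λ * Real.log a + w Λ - a ≤ w Λ * Real.log (w Λ)
    rcases (hw0 Λ).eq_or_lt with h | h
    · rw [← h]; simp [ha0.le]
    · have h2 := Real.log_le_sub_one_of_pos (div_pos ha0 h)
      rw [Real.log_div ha0.ne' h.ne'] at h2
      have h3 := mul_le_mul_of_nonneg_left h2 h.le
      have h4 : w Λ * (a / w Λ - 1) = a - w Λ := by field_simp
      rw [h4] at h3
      linarith
  have hptw : ∀ Λ, w Λ * Real.log (w Λ) ≤ -((k + 2 : ℝ) * β / 2) * (∑ i, V (Λ i) * w Λ)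
      + β / 4 * ((∑ i, ∑ j, Real.log ((Λ i - Λ j) ^ 2 + s ^ 2)) * w Λ)
      - β / 2 * (k + 2 : ℝ) * Real.log s * w Λ := by
    intro Λ
    by_cases hinj : Function.Injective Λ
    · have h1 : Real.log (w Λ) = gasLog β V (k + 2) Λ := by
        rw [hw, betaWeight_of_injective β V _ Λ hinj, Real.log_exp]
      have h2 : ∑ i, ∑ j, Real.log |Λ i - Λ j| ≤
          ∑ i, ∑ j, (1 / 2 * Real.log ((Λ i - Λ j) ^ 2 + s ^ 2) -
            if i = j then Real.log s else 0) := by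
        refine Finset.sum_le_sum fun i _ => Finset.sum_le_sum fun j _ => ?_
        split_ifs with hij
        · simp [hij]
        · have hne : Λ i - Λ j ≠ 0 := sub_ne_zero.2 fun h => hij (hinj h)
          have h3 : Real.log ((Λ i - Λ j) ^ 2) ≤ Real.log ((Λ i - Λ j) ^ 2 + s ^ 2) :=
            Real.log_le_log (by positivity) (by nlinarith)
          rw [Real.log_pow] at h3
          rw [Real.log_abs]
          push_cast at h3
          linarith
      simp only [Finset.sum_sub_distrib, Finset.sum_ite_eq, Finset.mem_univ, if_true,
        Finset.sum_const, Finset.card_univ, Fintype.card_fin, nsmul_eq_mul,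
        ← Finset.mul_sum] at h2
      rw [h1, gasLog, ← Finset.sum_mul]
      have h5 := mul_le_mul_of_nonneg_left h2 (mul_nonneg (half_pos hβ).le (hw0 Λ))
      push_cast at h5 ⊢
      linarith
    · have : w Λ = 0 := betaWeight_of_not_injective β hβ V _ Λ hinj
      simp [this]
  have hc1 : Continuous fun Λ : Fin (k + 2) → ℝ => ∑ i, V (Λ i) * w Λ := by fun_prop
  have hc2 : Continuous fun Λ : Fin (k + 2) → ℝ =>
      (∑ i, ∑ j, Real.log ((Λ i - Λ j) ^ 2 + s ^ 2)) * w Λ := by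
    refine Continuous.mul (continuous_finsetSum _ fun i _ => continuous_finsetSum _ fun j _ => ?_) hwc
    exact Continuous.log (by fun_prop) fun Λ => by positivity
  have hup : ∫ Λ in Q, w Λ * Real.log (w Λ) ≤
      -((k + 2 : ℝ) * β / 2) * (∫ Λ in Q, ∑ i, V (Λ i) * w Λ)
      + β / 4 * (∫ Λ in Q, (∑ i, ∑ j, Real.log ((Λ i - Λ j) ^ 2 + s ^ 2)) * w Λ)
      - β / 2 * (k + 2 : ℝ) * Real.log s * Z := by
    have i1 := (integrableOn_cube hc1 A B).const_mul (-((k + 2 : ℝ) * β / 2))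
    have i2 := (integrableOn_cube hc2 A B).const_mul (β / 4)
    have i3 := (integrableOn_cube hwc A B).const_mul (β / 2 * (k + 2 : ℝ) * Real.log s)
    have i4 : Integrable (fun Λ => -((k + 2 : ℝ) * β / 2) * (∑ i, V (Λ i) * w Λ) +
        β / 4 * ((∑ i, ∑ j, Real.log ((Λ i - Λ j) ^ 2 + s ^ 2)) * w Λ)) (volume.restrict Q) :=
      i1.add i2
    refine (integral_mono (integrableOn_cube (Real.continuous_mul_log.comp hwc) A B)
      (i4.sub i3) hptw).trans (le_of_eq ?_)
    have hZw : Z = ∫ Λ in Q, w Λ := rfl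
    rw [hZw, ← integral_const_mul, ← integral_const_mul, ← integral_const_mul,
      ← integral_add i1 i2, ← integral_sub i4 i3]
    rfl
  have hVm : ∫ Λ in Q, ∑ i, V (Λ i) * w Λ =
      (k + 2 : ℝ) * (Z * ∫ x in Set.Icc A B, V x * resP1 β V A B k x) := by
    rw [integral_finsetSum]
    · simp only [hQ, hw, marginal_integral β hβ V hV A B k hZ.ne' V hV]
      simp [hZd]
    · intro i _
      exact integrableOn_cube (by fun_prop) A B
  have hE := energy_le_marginal β hβ V hV A B k hZ s hs
  rw [hVm] at hup
  have hE' := mul_le_mul_of_nonneg_left hE (by positivity : 0 ≤ β / 4)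
  have htot := hlow.trans hup
  have hlog : Real.log a = Real.log Z - (k + 2 : ℝ) * Real.log (B - A) := by
    rw [ha, Real.log_div hZ.ne' (by positivity), Real.log_pow]; push_cast; ring
  rw [hlog] at htot
  refine le_of_mul_le_mul_left ?_ hZ
  refine (htot.trans (sub_le_sub_right (add_le_add_right hE' _) _)).trans (le_of_eq ?_)
  ring

/-- The cost of regularizing the logarithm at scale `s`. At `t = 0` both `Real.log |0|` and the
negative power of `|0|` are `0` by convention, and the claim reads `log s ≤ 0`. -/
lemma half_log_sub_log_le (s : ℝ) (hs : 0 < s) (hs1 : s ≤ 1) (t : ℝ) :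
    1 / 2 * Real.log (t ^ 2 + s ^ 2) - Real.log |t| ≤ 2 * √s * |t| ^ (-(1 / 2) : ℝ) := by
  rcases eq_or_ne t 0 with rfl | ht
  · have : Real.log s ≤ 0 := Real.log_nonpos hs.le hs1
    simp
    exact this
  · have ht0 : 0 < |t| := abs_pos.2 ht
    set r := s / |t| with hr
    have hr0 : 0 < r := by positivity
    have h1 : t ^ 2 + s ^ 2 ≤ (|t| * (1 + r)) ^ 2 := by
      have : |t| * (1 + r) = |t| + s := by rw [hr]; field_simp
      rw [this, ← sq_abs t]; nlinarith
    have h2 : 1 / 2 * Real.log (t ^ 2 + s ^ 2) ≤ Real.log |t| + Real.log (1 + r) := by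
      have := Real.log_le_log (by positivity) h1
      rw [Real.log_pow, Real.log_mul ht0.ne' (by positivity)] at this
      push_cast at this; linarith
    have h3 : Real.log (1 + r) ≤ 2 * √r := by
      have h4 : 1 + r ≤ (1 + √r) ^ 2 := by
        have := Real.sq_sqrt hr0.le
        nlinarith [Real.sqrt_nonneg r]
      have := Real.log_le_log (by positivity) h4
      rw [Real.log_pow] at this
      have h5 := Real.log_le_sub_one_of_pos (by positivity : 0 < 1 + √r)
      push_cast at this; linarith
    have h6 : √r = √s * |t| ^ (-(1 / 2) : ℝ) := by
      rw [hr, Real.sqrt_div hs.le, Real.rpow_neg ht0.le, ← Real.sqrt_eq_rpow, div_eq_mul_inv]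
    rw [h6] at h3
    linarith

/-! ### The logarithmic form and the comparison of the two bounds -/

/-- The bilinear logarithmic form `∬ log|x-y| f(x) g(y) dx dy` over the square `[A,B]²`. -/
noncomputable def logForm (A B : ℝ) (f g : ℝ → ℝ) : ℝ :=
  ∫ q, Real.log |q.1 - q.2| * (f q.1 * g q.2)
    ∂((volume.restrict (Set.Icc A B)).prod (volume.restrict (Set.Icc A B)))

lemma integrable_kernel_mul (A B : ℝ) {h : ℝ × ℝ → ℝ}
    (hh : Integrable h ((volume.restrict (Set.Icc A B)).prod (volume.restrict (Set.Icc A B))))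
    {f g : ℝ → ℝ} (hf : Measurable f) (hg : Measurable g) {F G : ℝ}
    (hF : ∀ x ∈ Set.Icc A B, |f x| ≤ F) (hG : ∀ x ∈ Set.Icc A B, |g x| ≤ G) :
    Integrable (fun q : ℝ × ℝ => h q * (f q.1 * g q.2))
      ((volume.restrict (Set.Icc A B)).prod (volume.restrict (Set.Icc A B))) := by
  refine hh.mul_bdd (c := F * G) ?_ ?_
  · exact ((hf.comp measurable_fst).mul (hg.comp measurable_snd)).aestronglyMeasurable
  · rw [Measure.prod_restrict]
    filter_upwards [ae_restrict_mem (measurableSet_Icc.prod measurableSet_Icc)] with q hq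
    rw [norm_mul]
    exact mul_le_mul (hF _ hq.1) (hG _ hq.2) (norm_nonneg _) ((abs_nonneg _).trans (hF _ hq.1))

lemma logForm_comm (A B : ℝ) (f g : ℝ → ℝ) : logForm A B f g = logForm A B g f := by
  unfold logForm
  rw [← integral_prod_swap]
  refine integral_congr_ae (Filter.Eventually.of_forall fun q => ?_)
  simp only [Prod.fst_swap, Prod.snd_swap]
  rw [abs_sub_comm]; ring

lemma logForm_sub_sub (A B : ℝ) {f g : ℝ → ℝ} (hf : Measurable f) (hg : Measurable g) {F G : ℝ}
    (hF : ∀ x ∈ Set.Icc A B, |f x| ≤ F) (hG : ∀ x ∈ Set.Icc A B, |g x| ≤ G) :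
    logForm A B (f - g) (f - g) = logForm A B f f - 2 * logForm A B f g + logForm A B g g := by
  have i1 := integrable_kernel_mul A B (integrable_log_kernel A B) hf hf hF hF
  have i2 := integrable_kernel_mul A B (integrable_log_kernel A B) hf hg hF hG
  have i3 := integrable_kernel_mul A B (integrable_log_kernel A B) hg hf hG hF
  have i4 := integrable_kernel_mul A B (integrable_log_kernel A B) hg hg hG hG
  have h2 : 2 * logForm A B f g = logForm A B f g + logForm A B g f := by
    rw [logForm_comm A B g f]; ring
  rw [h2]
  unfold logForm
  have i5 := i2.add i3
  have i6 := i1.sub i5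
  have e5 := integral_add i2 i3
  have e6 := integral_sub i1 i5
  have e7 := integral_add i6 i4
  simp only [Pi.add_apply, Pi.sub_apply] at e6 e7
  rw [← e5, ← e6, ← e7]
  refine integral_congr_ae (Filter.Eventually.of_forall fun q => ?_)
  simp only [Pi.sub_apply]
  ring

/-- Iterated-integral form of `logForm`, with the first factor pulled out of the inner integral. -/
lemma logForm_eq_potential (A B : ℝ) {f g : ℝ → ℝ} (hf : Measurable f) (hg : Measurable g)
    {F G : ℝ} (hF : ∀ x ∈ Set.Icc A B, |f x| ≤ F) (hG : ∀ x ∈ Set.Icc A B, |g x| ≤ G) :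
    Integrable (fun x => (∫ y in Set.Icc A B, Real.log |x - y| * g y) * f x)
        (volume.restrict (Set.Icc A B)) ∧
      logForm A B f g = ∫ x in Set.Icc A B, (∫ y in Set.Icc A B, Real.log |x - y| * g y) * f x := by
  have i1 := integrable_kernel_mul A B (integrable_log_kernel A B) hf hg hF hG
  have he : ∀ x, ∫ y in Set.Icc A B, Real.log |x - y| * (f x * g y) =
      (∫ y in Set.Icc A B, Real.log |x - y| * g y) * f x := by
    intro x
    rw [← integral_mul_const]
    refine integral_congr_ae (Filter.Eventually.of_forall fun y => ?_)
    simp only []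
    ring
  constructor
  · have := i1.integral_prod_left
    simpa only [he] using this
  · have := integral_prod _ i1
    simp only [he] at this
    exact this

/-- The lower bound of the partition function by the equilibrium density. -/
lemma partition_lower_density (β : ℝ) (hβ : 0 < β) (V : ℝ → ℝ) (hV : Continuous V) (A B : ℝ)
    (ρ : ℝ → ℝ) (hρm : Measurable ρ) (hρ0 : ∀ x, 0 ≤ ρ x) (M : ℝ) (hM : 0 < M)
    (hρM : ∀ x, ρ x ≤ M) (hρ1 : ∫ x in Set.Icc A B, ρ x = 1) (n : ℕ) :
    0 < resZ β V A B n ∧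
    -((n : ℝ) ^ 2 * β / 2) * (∫ x in Set.Icc A B, V x * ρ x) +
      β / 2 * (n * (n - 1)) * logForm A B ρ ρ - n * Real.log M
      ≤ Real.log (resZ β V A B n) := by
  set τ := volume.restrict (Set.Icc A B) with hτ
  have hρi : Integrable ρ τ := by
    by_contra h
    rw [integral_undef h] at hρ1
    exact zero_ne_one hρ1
  have hd : Measurable fun x => ENNReal.ofReal (ρ x) := hρm.ennreal_ofReal
  set ν := τ.withDensity fun x => ENNReal.ofReal (ρ x) with hν
  have hprob : IsProbabilityMeasure ν := by
    constructor
    rw [hν, withDensity_apply _ MeasurableSet.univ, Measure.restrict_univ,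
      ← ofReal_integral_eq_lintegral_ofReal hρi (Filter.Eventually.of_forall hρ0), hρ1,
      ENNReal.ofReal_one]
  have hle : ν ≤ ENNReal.ofReal M • τ := by
    rw [← withDensity_const]
    exact withDensity_mono (Filter.Eventually.of_forall fun x => ENNReal.ofReal_le_ofReal (hρM x))
  have h := partition_lower β hβ V hV A B n ν M hM hle
  have hVe : ∫ x, V x ∂ν = ∫ x in Set.Icc A B, V x * ρ x := by
    rw [hν, integral_withDensity_eq_integral_toReal_smul hd (by simp)]
    refine integral_congr_ae (Filter.Eventually.of_forall fun x => ?_)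
    simp only [ENNReal.toReal_ofReal (hρ0 x), smul_eq_mul]
    ring
  have hLe : ∫ q, Real.log |q.1 - q.2| ∂(ν.prod ν) = logForm A B ρ ρ := by
    have hd2 : Measurable fun z : ℝ × ℝ => ENNReal.ofReal (ρ z.1) * ENNReal.ofReal (ρ z.2) :=
      (hd.comp measurable_fst).mul (hd.comp measurable_snd)
    rw [hν, prod_withDensity hd hd, integral_withDensity_eq_integral_toReal_smul hd2
      (Filter.Eventually.of_forall fun q => ENNReal.mul_lt_top ENNReal.ofReal_lt_top
        ENNReal.ofReal_lt_top)]
    unfold logForm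
    refine integral_congr_ae (Filter.Eventually.of_forall fun x => ?_)
    simp only [ENNReal.toReal_mul, ENNReal.toReal_ofReal (hρ0 _), smul_eq_mul]
    ring
  rw [hVe, hLe] at h
  have hpos : 0 < resZ β V A B n := (Real.exp_pos _).trans_le h
  exact ⟨hpos, (Real.le_log_iff_exp_le hpos).2 h⟩

/-- Regularizing the logarithm at scale `s` costs `O(√s)` for bounded densities. -/
lemma smoothed_form_le (A B : ℝ) (hAB : A ≤ B) {p : ℝ → ℝ} (hp : Continuous p)
    (hp0 : ∀ x, 0 ≤ p x) {F : ℝ} (hF : ∀ x ∈ Set.Icc A B, p x ≤ F) (s : ℝ) (hs : 0 < s)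
    (hs1 : s ≤ 1) :
    1 / 2 * (∫ x in Set.Icc A B, ∫ y in Set.Icc A B, Real.log ((x - y) ^ 2 + s ^ 2) * (p x * p y))
      ≤ logForm A B p p + 2 * √s * F ^ 2 *
        ∫ q, |q.1 - q.2| ^ (-(1 / 2) : ℝ)
          ∂((volume.restrict (Set.Icc A B)).prod (volume.restrict (Set.Icc A B))) := by
  set τ := volume.restrict (Set.Icc A B) with hτ
  have hpF : ∀ x ∈ Set.Icc A B, |p x| ≤ F := fun x hx => by
    rw [abs_of_nonneg (hp0 x)]; exact hF x hx
  have hGc : Continuous fun q : ℝ × ℝ => Real.log ((q.1 - q.2) ^ 2 + s ^ 2) :=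
    Continuous.log (by fun_prop) fun q => by positivity
  have hGi : Integrable (fun q : ℝ × ℝ => Real.log ((q.1 - q.2) ^ 2 + s ^ 2)) (τ.prod τ) := by
    rw [hτ, Measure.prod_restrict]
    exact hGc.continuousOn.integrableOn_compact (isCompact_Icc.prod isCompact_Icc)
  have i1 := integrable_kernel_mul A B hGi hp.measurable hp.measurable hpF hpF
  have i2 := integrable_kernel_mul A B (integrable_log_kernel A B) hp.measurable hp.measurable
    hpF hpF
  have i3 := (integrable_invsqrt_kernel A B hAB).const_mul (2 * √s * F ^ 2)
  rw [← integral_prod _ i1, logForm, ← integral_const_mul, ← integral_const_mul,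
    ← integral_add i2 i3]
  refine integral_mono_ae (i1.const_mul _) (i2.add i3) ?_
  rw [Measure.prod_restrict]
  filter_upwards [ae_restrict_mem (measurableSet_Icc.prod measurableSet_Icc)] with q hq
  have h1 := half_log_sub_log_le s hs hs1 (q.1 - q.2)
  have hpp : p q.1 * p q.2 ≤ F ^ 2 := by
    rw [sq]
    exact mul_le_mul (hF _ hq.1) (hF _ hq.2) (hp0 _) ((hp0 _).trans (hF _ hq.1))
  have hpp0 : 0 ≤ p q.1 * p q.2 := mul_nonneg (hp0 _) (hp0 _)
  have h2 := mul_le_mul_of_nonneg_right h1 hpp0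
  have h3 : 2 * √s * |q.1 - q.2| ^ (-(1 / 2) : ℝ) * (p q.1 * p q.2) ≤
      2 * √s * |q.1 - q.2| ^ (-(1 / 2) : ℝ) * F ^ 2 :=
    mul_le_mul_of_nonneg_left hpp (by positivity)
  change _ ≤ Real.log |q.1 - q.2| * (p q.1 * p q.2) +
    2 * √s * F ^ 2 * |q.1 - q.2| ^ (-(1 / 2) : ℝ)
  linarith

/-- The bound for a globally continuous potential, with explicit regularity data. -/
lemma energy_bound (β : ℝ) (hβ : 0 < β) (V : ℝ → ℝ) (hV : Continuous V) (A B L : ℝ)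
    (hAB : 1 ≤ B - A) (hL : 0 ≤ L)
    (hlip : ∀ x ∈ Set.Icc A B, ∀ z ∈ Set.Icc A B, |V x - V z| ≤ L * |x - z|)
    (ρ : ℝ → ℝ) (hρm : Measurable ρ) (hρ0 : ∀ x, 0 ≤ ρ x) (M : ℝ) (hM : 0 < M)
    (hρM : ∀ x, ρ x ≤ M) (hρ1 : ∫ x in Set.Icc A B, ρ x = 1) (c : ℝ)
    (hle : ∀ x ∈ Set.Icc A B, 2 * (∫ y in Set.Icc A B, Real.log |x - y| * ρ y) - V x ≤ c)
    (heq : ∀ x ∈ Set.Icc A B, ρ x ≠ 0 →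
      2 * (∫ y in Set.Icc A B, Real.log |x - y| * ρ y) - V x = c) :
    ∃ C > 0, ∀ k : ℕ, -logForm A B (resP1 β V A B k - ρ) (resP1 β V A B k - ρ) ≤
      C * Real.log (k + 2 : ℝ) / (k + 2 : ℝ) := by
  set S := ∫ q, |q.1 - q.2| ^ (-(1 / 2) : ℝ)
    ∂((volume.restrict (Set.Icc A B)).prod (volume.restrict (Set.Icc A B))) with hS
  set C₁ := 8 * 2 ^ β * Real.exp (β * L / 2) with hC₁
  set K := 2 / β * (Real.log M + Real.log (B - A)) + logForm A B ρ ρ + 2 * C₁ ^ 2 * S with hK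
  have hlog2 : 0 < Real.log 2 := Real.log_pos (by norm_num)
  refine ⟨|K| / Real.log 2 + 14, by positivity, fun k => ?_⟩
  obtain ⟨hZ, hlow⟩ := partition_lower_density β hβ V hV A B ρ hρm hρ0 M hM hρM hρ1 (k + 2)
  set p := resP1 β V A B k with hp
  have hpc : Continuous p := resP1_continuous β hβ V hV A B k
  have hp0 : ∀ x, 0 ≤ p x := resP1_nonneg β V A B k
  have hpF : ∀ x ∈ Set.Icc A B, p x ≤ C₁ * (k + 2 : ℝ) ^ 3 := fun x hx =>
    resP1_le β hβ V hV A B L hAB hL hlip k hZ x hx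
  have hpF' : ∀ x ∈ Set.Icc A B, |p x| ≤ C₁ * (k + 2 : ℝ) ^ 3 := fun x hx => by
    rw [abs_of_nonneg (hp0 x)]; exact hpF x hx
  have hρM' : ∀ x ∈ Set.Icc A B, |ρ x| ≤ M := fun x _ => by
    rw [abs_of_nonneg (hρ0 x)]; exact hρM x
  have hp1 : ∫ x in Set.Icc A B, p x = 1 := resP1_integral β hβ V hV A B k hZ
  push_cast at hlow
  set N : ℝ := (k + 2 : ℝ) with hN
  have hN2 : 2 ≤ N := by simp [hN]
  have hN0 : 0 < N := by linarith
  -- The regularization scale `N⁻¹⁴` beats the square of the density bound `C₁ N³`.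
  set s : ℝ := (N ^ 14)⁻¹ with hs
  have hs0 : 0 < s := by positivity
  have hs1 : s ≤ 1 := inv_le_one_of_one_le₀ (one_le_pow₀ (by linarith))
  have hsq : √s = (N ^ 7)⁻¹ := by
    rw [hs, Real.sqrt_eq_iff_mul_self_eq (by positivity) (by positivity), ← mul_inv, ← pow_add]
  have hlogs : Real.log s = -(14 * Real.log N) := by
    rw [hs, Real.log_inv, Real.log_pow]; norm_num
  have hup := partition_upper β hβ V hV A B (by linarith) k hZ s hs0
  have hsm := smoothed_form_le A B (by linarith) hpc hp0 hpF s hs0 hs1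
  rw [← hS, hsq] at hsm
  have herr : 2 * (N ^ 7)⁻¹ * (C₁ * N ^ 3) ^ 2 * S = 2 * C₁ ^ 2 * S / N := by
    field_simp
  rw [herr] at hsm
  have hVp : Integrable (fun x => V x * p x) (volume.restrict (Set.Icc A B)) :=
    (hV.mul hpc).continuousOn.integrableOn_compact isCompact_Icc
  have hpi : Integrable p (volume.restrict (Set.Icc A B)) :=
    hpc.continuousOn.integrableOn_compact isCompact_Icc
  have hρi : Integrable ρ (volume.restrict (Set.Icc A B)) := by
    by_contra h
    rw [integral_undef h] at hρ1
    exact zero_ne_one hρ1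
  obtain ⟨j1, e1⟩ := logForm_eq_potential A B hpc.measurable hρm hpF' hρM'
  obtain ⟨j2, e2⟩ := logForm_eq_potential A B hρm hρm hρM' hρM'
  have hq1 : 2 * logForm A B p ρ - c ≤ ∫ x in Set.Icc A B, V x * p x := by
    have h1 : 2 * logForm A B p ρ - c = ∫ x in Set.Icc A B,
        (2 * ((∫ y in Set.Icc A B, Real.log |x - y| * ρ y) * p x) - c * p x) := by
      rw [integral_sub (j1.const_mul 2) (hpi.const_mul c), integral_const_mul,
        integral_const_mul, hp1, ← e1, mul_one]
    rw [h1]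
    refine setIntegral_mono_on ((j1.const_mul 2).sub (hpi.const_mul c)) hVp measurableSet_Icc
      fun x hx => ?_
    have := mul_le_mul_of_nonneg_right (hle x hx) (hp0 x)
    nlinarith
  have hq2 : ∫ x in Set.Icc A B, V x * ρ x = 2 * logForm A B ρ ρ - c := by
    have h1 : 2 * logForm A B ρ ρ - c = ∫ x in Set.Icc A B,
        (2 * ((∫ y in Set.Icc A B, Real.log |x - y| * ρ y) * ρ x) - c * ρ x) := by
      rw [integral_sub (j2.const_mul 2) (hρi.const_mul c), integral_const_mul,
        integral_const_mul, hρ1, ← e2, mul_one]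
    rw [h1]
    refine setIntegral_congr_fun measurableSet_Icc fun x hx => ?_
    rcases eq_or_ne (ρ x) 0 with h0 | h0
    · simp [h0]
    · rw [← heq x hx h0]; ring
  rw [hq2] at hlow
  rw [logForm_sub_sub A B hpc.measurable hρm hpF' hρM']
  rw [hlogs] at hup
  set I2 := ∫ x in Set.Icc A B, ∫ y in Set.Icc A B, Real.log ((x - y) ^ 2 + s ^ 2) * (p x * p y)
  set W := ∫ x in Set.Icc A B, V x * p x
  set Epp := logForm A B p p
  set Epr := logForm A B p ρ
  set Err := logForm A B ρ ρ
  have hn2 : 0 < N ^ 2 * β / 2 := by positivity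
  have m1 := mul_le_mul_of_nonneg_left hsm hn2.le
  have m2 := mul_le_mul_of_nonneg_left hq1 hn2.le
  have hfin : N ^ 2 * β / 2 * (-(Epp - 2 * Epr + Err)) ≤
      N ^ 2 * β / 2 * ((K + 14 * Real.log N) / N) := by
    have e3 : N ^ 2 * β / 2 * ((K + 14 * Real.log N) / N) =
        N * (Real.log M + Real.log (B - A)) + N * β / 2 * Err +
          N ^ 2 * β / 2 * (2 * C₁ ^ 2 * S / N) + 14 * (N * β / 2) * Real.log N := by
      rw [hK]; field_simp
    rw [e3]
    linarith
  have hfin' := le_of_mul_le_mul_left hfin hn2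
  refine hfin'.trans ?_
  gcongr
  have hlogN : Real.log 2 ≤ Real.log N := Real.log_le_log (by norm_num) hN2
  have : K ≤ |K| / Real.log 2 * Real.log N := by
    calc K ≤ |K| := le_abs_self K
      _ = |K| / Real.log 2 * Real.log 2 := by field_simp
      _ ≤ _ := by gcongr
  linarith

/-! ### Reduction to a globally continuous potential -/

lemma betaWeight_congr (β : ℝ) {V W : ℝ → ℝ} (n : ℕ) (Λ : Fin n → ℝ)
    (h : ∀ i, V (Λ i) = W (Λ i)) : betaWeight β V n Λ = betaWeight β W n Λ := by
  unfold betaWeight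
  simp only [h]

lemma resZ_congr (β : ℝ) {V W : ℝ → ℝ} (A B : ℝ) (n : ℕ) (h : ∀ x ∈ Set.Icc A B, V x = W x) :
    resZ β V A B n = resZ β W A B n := by
  unfold resZ
  refine setIntegral_congr_fun (MeasurableSet.univ_pi fun _ => measurableSet_Icc) fun Λ hΛ => ?_
  exact betaWeight_congr β n Λ fun i => h _ (hΛ i (Set.mem_univ i))

lemma resP1_congr (β : ℝ) {V W : ℝ → ℝ} (A B : ℝ) (k : ℕ) (h : ∀ x ∈ Set.Icc A B, V x = W x)
    (l : ℝ) (hl : l ∈ Set.Icc A B) : resP1 β V A B k l = resP1 β W A B k l := by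
  unfold resP1
  rw [resZ_congr β A B (k + 2) h]
  congr 1
  refine setIntegral_congr_fun (MeasurableSet.univ_pi fun _ => measurableSet_Icc) fun y hy => ?_
  refine betaWeight_congr β _ _ fun i => h _ ?_
  induction i using Fin.cases with
  | zero => simpa using hl
  | succ i => simpa using hy i (Set.mem_univ i)

/-- A function with a holomorphic extension near a compact interval is Lipschitz on it. -/
lemma lipschitz_of_holomorphic (V : ℝ → ℝ) (D : Set ℂ) (hD : IsOpen D) (Vc : ℂ → ℂ)
    (hVc : DifferentiableOn ℂ Vc D) (hV : ∀ x : ℝ, (x : ℂ) ∈ D → Vc x = V x) (A B : ℝ)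
    (hI : ∀ x : ℝ, x ∈ Set.Icc A B → (x : ℂ) ∈ D) :
    ∃ L, 0 ≤ L ∧ ∀ x ∈ Set.Icc A B, ∀ z ∈ Set.Icc A B, |V x - V z| ≤ L * |x - z| := by
  have hdc : ContinuousOn (fun x : ℝ => deriv Vc x) (Set.Icc A B) :=
    (hVc.deriv hD).continuousOn.comp Complex.continuous_ofReal.continuousOn hI
  obtain ⟨L, hL⟩ := isCompact_Icc.exists_bound_of_continuousOn hdc
  refine ⟨max L 0, le_max_right _ _, fun x hx z hz => ?_⟩
  have hder : ∀ t ∈ Set.Icc A B,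
      HasDerivWithinAt (fun t : ℝ => Vc t) (deriv Vc t) (Set.Icc A B) t := fun t ht =>
    ((hVc.differentiableAt (hD.mem_nhds (hI t ht))).hasDerivAt.comp_ofReal).hasDerivWithinAt
  have h := (convex_Icc A B).norm_image_sub_le_of_norm_hasDerivWithin_le hder
    (fun t ht => (hL t ht).trans (le_max_left L 0)) hz hx
  rw [hV x (hI x hx), hV z (hI z hz), ← Complex.ofReal_sub, Complex.norm_real] at h
  exact h

lemma EquilC13.density_regular {V : ℝ → ℝ} {D : Set ℂ} {ρ : ℝ → ℝ} {P : ℂ → ℂ}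
    (hC : EquilC13 V D ρ P) : Measurable ρ ∧ ∃ M > 0, ∀ x, ρ x ≤ M := by
  have hP : ContinuousOn (fun x : ℝ => P x) (Set.Icc (-2) 2) :=
    hC.P_anal.continuousOn.comp Complex.continuous_ofReal.continuousOn hC.D_supset
  have hc : ContinuousOn ρ (Set.Icc (-2) 2) := by
    have h1 : ContinuousOn (fun x : ℝ => (1 / (2 * Real.pi)) * (P x).re * Real.sqrt (4 - x ^ 2))
        (Set.Icc (-2) 2) := by
      refine (continuousOn_const.mul (Complex.continuous_re.comp_continuousOn hP)).mul ?_
      fun_prop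
    exact h1.congr hC.ρ_eq
  constructor
  · classical
    have h2 := hc.measurable_piecewise (g := fun _ => (0 : ℝ)) continuousOn_const
      measurableSet_Icc
    convert h2 using 1
    ext x
    by_cases hx : x ∈ Set.Icc (-2 : ℝ) 2
    · rw [Set.piecewise_eq_of_mem _ _ _ hx]
    · rw [Set.piecewise_eq_of_notMem _ _ _ hx, hC.ρ_supp x hx]
  · obtain ⟨M, hM⟩ := isCompact_Icc.exists_bound_of_continuousOn hc
    refine ⟨max M 1, by positivity, fun x => ?_⟩
    by_cases hx : x ∈ Set.Icc (-2 : ℝ) 2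
    · exact (le_abs_self _).trans ((hM x hx).trans (le_max_left _ _))
    · rw [hC.ρ_supp x hx]; positivity

/-- upper bound `C log n / n` for the logarithmic energy of
`p_1^{(n)} - ρ` for a β-ensemble restricted to `I = [-2-ε, 2+ε]`. -/
theorem log_energy_marginal_upper_bound
    (β : ℝ) (hβ : 0 < β) (V : ℝ → ℝ)
    (D : Set ℂ) (ρ : ℝ → ℝ) (P : ℂ → ℂ) (hC : EquilC13 V D ρ P)
    (ε : ℝ) (hε : 0 < ε)
    (hI : ∀ x : ℝ, x ∈ Set.Icc (-2 - ε) (2 + ε) → (x : ℂ) ∈ D) :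
    ∃ C > 0, ∀ k : ℕ,
      (∫ l in Set.Icc (-2 - ε) (2 + ε), ∫ m in Set.Icc (-2 - ε) (2 + ε),
          Real.log (1 / |l - m|) *
            ((resP1 β V (-2 - ε) (2 + ε) k l - ρ l) *
              (resP1 β V (-2 - ε) (2 + ε) k m - ρ m)))
        ≤ C * Real.log (k + 2 : ℝ) / (k + 2 : ℝ) := by
  obtain ⟨Vc, hVc, hVeq⟩ := hC.V_anal
  obtain ⟨c, hc1, hc2⟩ := hC.equil
  obtain ⟨hρm, M, hM, hρM⟩ := hC.density_regular
  set A := -2 - ε with hA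
  set B := 2 + ε with hB
  have hAB : A ≤ B := by linarith
  obtain ⟨L, hL, hlip⟩ := lipschitz_of_holomorphic V D hC.D_open Vc hVc hVeq A B hI
  have hsub : ∀ x, x ∉ Set.Icc A B → ρ x = 0 := fun x hx =>
    hC.ρ_supp x fun h => hx ⟨by linarith [h.1], by linarith [h.2]⟩
  -- `V` is only controlled on `[A,B]`; its constant extension from there is continuous on `ℝ`.
  set W : ℝ → ℝ := fun x => V (Set.projIcc A B hAB x) with hW
  have hVW : ∀ x ∈ Set.Icc A B, V x = W x := fun x hx => by
    simp only [hW, Set.projIcc_of_mem hAB hx]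
  have hVc' : ContinuousOn V (Set.Icc A B) := by
    have : LipschitzOnWith (Real.toNNReal L) V (Set.Icc A B) := by
      refine LipschitzOnWith.of_dist_le_mul fun x hx z hz => ?_
      rw [Real.dist_eq, Real.dist_eq, Real.coe_toNNReal L hL]
      exact hlip x hx z hz
    exact this.continuousOn
  have hWc : Continuous W :=
    (continuousOn_iff_continuous_domRestrict.1 hVc').comp continuous_projIcc
  have hρ1 : ∫ x in Set.Icc A B, ρ x = 1 := by
    rw [setIntegral_eq_integral_of_forall_compl_eq_zero fun x hx => hsub x hx, hC.ρ_int]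
  have hU : ∀ x, ∫ y in Set.Icc A B, Real.log |x - y| * ρ y = ∫ y, Real.log |x - y| * ρ y :=
    fun x => setIntegral_eq_integral_of_forall_compl_eq_zero fun y hy => by
      rw [hsub y hy, mul_zero]
  obtain ⟨C, hC0, hCk⟩ := energy_bound β hβ W hWc A B L (by linarith) hL
    (fun x hx z hz => by rw [← hVW x hx, ← hVW z hz]; exact hlip x hx z hz)
    ρ hρm hC.ρ_nonneg M hM hρM hρ1 c
    (fun x hx => by
      rw [hU, ← hVW x hx]
      by_cases h : x ∈ Set.Icc (-2 : ℝ) 2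
      · exact (hc1 x h).le
      · exact (hc2 x h).le)
    (fun x hx h0 => by
      rw [hU, ← hVW x hx]
      exact hc1 x (by_contra fun h => h0 (hC.ρ_supp x h)))
  refine ⟨C, hC0, fun k => le_trans (le_of_eq ?_) (hCk k)⟩
  set p := resP1 β W A B k with hp
  have hpc : Continuous p := resP1_continuous β hβ W hWc A B k
  obtain ⟨F, hF⟩ := isCompact_Icc.exists_bound_of_continuousOn (hpc.continuousOn (s := Set.Icc A B))
  have hbd : ∀ x ∈ Set.Icc A B, |(p - ρ) x| ≤ F + M := fun x hx => by
    refine (abs_sub (p x) (ρ x)).trans (add_le_add (hF x hx) ?_)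
    rw [abs_of_nonneg (hC.ρ_nonneg x)]
    exact hρM x
  have hm : Measurable (p - ρ) := hpc.measurable.sub hρm
  have hi := integrable_kernel_mul A B (integrable_log_kernel A B) hm hm hbd hbd
  rw [logForm, integral_prod _ hi, ← integral_neg]
  refine setIntegral_congr_fun measurableSet_Icc fun l hl => ?_
  simp only []
  rw [← integral_neg]
  refine setIntegral_congr_fun measurableSet_Icc fun m hm' => ?_
  simp only [Pi.sub_apply, one_div, Real.log_inv]
  rw [resP1_congr β A B k hVW l hl, resP1_congr β A B k hVW m hm']
  ring
end

section
/- Let f : ℝ → ℝ be integrable with ∫_ℝ f(λ) dλ = 0, and let f̂(k) = ∫_ℝ f(λ) e^{-ikλ} dλ denote its Fourier transform. Assume ∫_0^∞ |f̂(k)|²/k dk < ∞. Then for every z ∈ ℂ with Im z > 0: | ∫_ℝ f(λ)/(λ−z) dλ | ≤ (2·Im z)^{-1} · ( ∫_0^∞ |f̂(k)|² k^{-1} dk )^{1/2}. -/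
open MeasureTheory

/-!
For `Im z > 0` one has `1/(x - z) = i ∫_{k>0} e^{-ikx} e^{izk} dk`. The function
`f(x) e^{-ikx} e^{izk}` is integrable on `ℝ × (0, ∞)`, so Fubini's theorem gives
`∫ f(x)/(x - z) dx = i ∫_{k>0} f̂(k) e^{izk} dk`, whence the modulus is at most
`∫_{k>0} |f̂(k)| e^{-k Im z} dk`. Cauchy–Schwarz applied to the splitting
`(|f̂(k)| / √k) · (√k e^{-k Im z})`, together with `∫_{k>0} k e^{-2k Im z} dk = (2 Im z)⁻²`,
gives the bound.
-/

/-- The resolvent kernel as a Laplace-type integral over positive frequencies. -/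
lemma inv_sub_eq_integral_exp (x : ℝ) (z : ℂ) (hz : 0 < z.im) :
    ((x : ℂ) - z)⁻¹ = Complex.I * ∫ k in Set.Ioi (0 : ℝ),
      Complex.exp (-Complex.I * k * x) * Complex.exp (Complex.I * z * k) := by
  have hre : (-Complex.I * ((x : ℂ) - z)).re < 0 := by simpa using hz
  have hne : (x : ℂ) - z ≠ 0 := by
    intro h
    simp [h] at hre
  have h := integral_exp_mul_complex_Ioi hre 0
  have hcongr : ∀ k : ℝ, Complex.exp (-Complex.I * k * x) * Complex.exp (Complex.I * z * k)
      = Complex.exp (-Complex.I * ((x : ℂ) - z) * k) := by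
    intro k
    rw [← Complex.exp_add]
    congr 1
    ring
  simp_rw [hcongr]
  rw [h]
  have hI := Complex.I_ne_zero
  simp only [Complex.ofReal_zero, mul_zero, Complex.exp_zero]
  field_simp

lemma norm_exp_neg_I_mul_mul (k x : ℝ) : ‖Complex.exp (-Complex.I * k * x)‖ = 1 := by
  simp [Complex.norm_exp]

lemma norm_exp_I_mul_mul (z : ℂ) (k : ℝ) :
    ‖Complex.exp (Complex.I * z * k)‖ = Real.exp (-(z.im * k)) := by
  simp [Complex.norm_exp]

lemma integral_stieltjes_eq (f : ℝ → ℝ) (hf : Integrable f) (z : ℂ) (hz : 0 < z.im) :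
    ∫ x : ℝ, (f x : ℂ) / ((x : ℂ) - z) = Complex.I * ∫ k in Set.Ioi (0 : ℝ),
      (∫ x : ℝ, (f x : ℂ) * Complex.exp (-Complex.I * k * x)) *
        Complex.exp (Complex.I * z * k) := by
  have hre : (Complex.I * z).re < 0 := by simpa using hz
  have hprod : Integrable (Function.uncurry fun x k : ℝ =>
      (f x : ℂ) * (Complex.exp (-Complex.I * k * x) * Complex.exp (Complex.I * z * k)))
      (volume.prod (volume.restrict (Set.Ioi (0 : ℝ)))) := by
    have h1 := Integrable.mul_prod (hf.ofReal (𝕜 := ℂ)) (integrableOn_exp_mul_complex_Ioi hre 0)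
    have hc : Continuous fun p : ℝ × ℝ => Complex.exp (-Complex.I * p.2 * p.1) := by fun_prop
    refine (h1.bdd_mul (c := 1) hc.aestronglyMeasurable
      (ae_of_all _ fun p => (norm_exp_neg_I_mul_mul p.2 p.1).le)).congr (ae_of_all _ fun p => ?_)
    simp only [Function.uncurry]
    exact mul_left_comm _ _ _
  calc ∫ x : ℝ, (f x : ℂ) / ((x : ℂ) - z)
      = ∫ x : ℝ, Complex.I * ∫ k in Set.Ioi (0 : ℝ), (f x : ℂ) *
          (Complex.exp (-Complex.I * k * x) * Complex.exp (Complex.I * z * k)) := by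
        congr 1 with x
        rw [integral_const_mul, div_eq_mul_inv, inv_sub_eq_integral_exp x z hz]
        ring
    _ = Complex.I * ∫ k in Set.Ioi (0 : ℝ), ∫ x : ℝ, (f x : ℂ) *
          (Complex.exp (-Complex.I * k * x) * Complex.exp (Complex.I * z * k)) := by
        rw [integral_const_mul, integral_integral_swap hprod]
    _ = _ := by
        simp_rw [← mul_assoc, integral_mul_const]

lemma continuous_fourier (f : ℝ → ℝ) (hf : Integrable f) :
    Continuous fun k : ℝ => ∫ x : ℝ, (f x : ℂ) * Complex.exp (-Complex.I * k * x) := by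
  refine continuous_of_dominated (bound := fun x => ‖f x‖) (fun k => ?_) (fun k => ?_) hf.norm ?_
  · exact (hf.ofReal (𝕜 := ℂ)).aestronglyMeasurable.mul
      (by fun_prop : Continuous fun x : ℝ =>
        Complex.exp (-Complex.I * k * x)).aestronglyMeasurable
  · refine ae_of_all _ fun x => ?_
    rw [norm_mul, norm_exp_neg_I_mul_mul, mul_one, Complex.norm_real]
  · exact ae_of_all _ fun x => by fun_prop

lemma integral_mul_exp_sq {η : ℝ} (hη : 0 < η) :
    ∫ k in Set.Ioi (0 : ℝ), k * Real.exp (-(2 * η * k)) = ((2 * η)⁻¹) ^ 2 := by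
  have h := Real.integral_rpow_mul_exp_neg_mul_Ioi (a := 2) (r := 2 * η) (by norm_num)
    (by positivity)
  have h2 : (2 : ℝ) - 1 = 1 := by norm_num
  simpa [h2] using h

/-- bound for the Stieltjes transform of a mean-zero density via the
weighted `L²` norm of its Fourier transform `f̂(k) = ∫ f(λ) e^{-ikλ} dλ`. -/
theorem stieltjes_transform_fourier_bound
    (f : ℝ → ℝ) (hf : Integrable f) (hzero : (∫ x, f x) = 0)
    (hL : IntegrableOn
      (fun k : ℝ => ‖∫ x : ℝ, (f x : ℂ) * Complex.exp (-Complex.I * k * x)‖ ^ 2 / k)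
      (Set.Ioi 0)) :
    ∀ z : ℂ, 0 < z.im →
      ‖∫ x : ℝ, (f x : ℂ) / ((x : ℂ) - z)‖
        ≤ (2 * z.im)⁻¹ *
          Real.sqrt (∫ k in Set.Ioi (0:ℝ),
            ‖∫ x : ℝ, (f x : ℂ) * Complex.exp (-Complex.I * k * x)‖ ^ 2 / k) := by
  intro z hz
  rw [integral_stieltjes_eq f hf z hz, norm_mul, Complex.norm_I, one_mul]
  have hFc := continuous_fourier f hf
  set F : ℝ → ℂ := fun k => ∫ x : ℝ, (f x : ℂ) * Complex.exp (-Complex.I * k * x) with hF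
  change IntegrableOn (fun k : ℝ => ‖F k‖ ^ 2 / k) (Set.Ioi 0) at hL
  change ‖∫ k in Set.Ioi (0 : ℝ), F k * Complex.exp (Complex.I * z * k)‖ ≤
    (2 * z.im)⁻¹ * Real.sqrt (∫ k in Set.Ioi (0:ℝ), ‖F k‖ ^ 2 / k)
  have hg2 := integral_mul_exp_sq hz
  have hgi : IntegrableOn (fun k : ℝ => k * Real.exp (-(2 * z.im * k))) (Set.Ioi 0) :=
    .of_integral_ne_zero (by rw [hg2]; positivity)
  -- The squares of the two Cauchy–Schwarz factors.
  have hu : ∀ k ∈ Set.Ioi (0 : ℝ), ‖F k‖ ^ 2 / k = (‖F k‖ / √k) ^ 2 := fun k hk => by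
    rw [div_pow, Real.sq_sqrt (le_of_lt hk)]
  have hv : ∀ k ∈ Set.Ioi (0 : ℝ),
      k * Real.exp (-(2 * z.im * k)) = (√k * Real.exp (-(z.im * k))) ^ 2 := fun k hk => by
    rw [mul_pow, Real.sq_sqrt (le_of_lt hk), ← Real.exp_nat_mul]
    push_cast
    ring_nf
  have hmu : MemLp (fun k : ℝ => ‖F k‖ / √k) 2 (volume.restrict (Set.Ioi 0)) := by
    refine (memLp_two_iff_integrable_sq ?_).2 (hL.congr_fun hu measurableSet_Ioi)
    exact (hFc.norm.measurable.div Real.continuous_sqrt.measurable).aestronglyMeasurable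
  have hmv : MemLp (fun k : ℝ => √k * Real.exp (-(z.im * k))) 2
      (volume.restrict (Set.Ioi 0)) := by
    refine (memLp_two_iff_integrable_sq ?_).2 (hgi.congr_fun hv measurableSet_Ioi)
    exact (by fun_prop : Continuous fun k : ℝ =>
      √k * Real.exp (-(z.im * k))).aestronglyMeasurable
  have hCS := integral_mul_le_Lp_mul_Lq_of_nonneg (μ := volume.restrict (Set.Ioi (0 : ℝ)))
    (f := fun k => ‖F k‖ / √k) (g := fun k => √k * Real.exp (-(z.im * k)))
    Real.HolderConjugate.two_two (ae_of_all _ fun k => by dsimp; positivity)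
    (ae_of_all _ fun k => by dsimp; positivity) (by simpa using hmu) (by simpa using hmv)
  simp only [Real.rpow_two, ← Real.sqrt_eq_rpow] at hCS
  rw [← setIntegral_congr_fun measurableSet_Ioi hu, ← setIntegral_congr_fun measurableSet_Ioi hv,
    hg2, Real.sqrt_sq (by positivity), mul_comm] at hCS
  refine (norm_integral_le_integral_norm _).trans (le_of_eq_of_le ?_ hCS)
  refine setIntegral_congr_fun measurableSet_Ioi fun k hk => ?_
  have hk0 : √k ≠ 0 := (Real.sqrt_pos.2 hk).ne'
  simp only [norm_mul, norm_exp_I_mul_mul]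
  field_simp
end

section
/- (Positivity of logarithmic energy for signed densities of total mass zero) Let f : ℝ → ℝ be a bounded measurable function with compact support such that ∫_ℝ f(λ) dλ = 0. Then ∫_ℝ ∫_ℝ log(1/|λ−μ|) · f(λ) f(μ) dλ dμ ≥ 0. -/
open MeasureTheory

/-!
For `0 < d ≤ S`, the logarithmic kernel is a superposition of triangle kernels:
`∫ s in (0, S], (s - d)⁺ / s² = log S - log d - 1 + d / S` (`integral_tri_div_sq`).
Each triangle kernel is positive semidefinite, since
`(s - |x - y|)⁺ = ∫ 𝟙_[0,s](c - x) 𝟙_[0,s](c - y) dc` makes its energy an integral over `c` of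
squares (`tri_energy_nonneg`). Integrating over `s` (`truncated_energy_nonneg`), the kernel
`log S - log |x - y| - 1 + |x - y| / S` has nonnegative energy once `S` is at least the diameter
of the support of `f`. As `f` has mass zero, the constants `log S - 1` contribute nothing, so
`L[f, f] + D / S ≥ 0` with `D = ∬ |x - y| f(x) f(y)`, and `S → ∞` gives `L[f, f] ≥ 0`.
-/

/-- A difference kernel `K (x - y)`, with `K` integrable on the set of differences of points of the
support, is integrable against `f ⊗ f`: it is a convolution integrand times a bounded factor. -/
lemma integrable_kernel {f K : ℝ → ℝ} {M B : ℝ} (hmeas : Measurable f) (hM : ∀ x, |f x| ≤ M)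
    (hB : ∀ x, B < |x| → f x = 0) (hf : Integrable f)
    (hK : IntegrableOn K (Set.Icc (-(2 * B)) (2 * B))) :
    Integrable (fun p : ℝ × ℝ => K (p.1 - p.2) * f p.1 * f p.2) (volume.prod volume) := by
  have hK' := (integrable_indicator_iff measurableSet_Icc).2 hK
  have h1 := Integrable.convolution_integrand (ContinuousLinearMap.mul ℝ ℝ) hf hK'
  have h2 := h1.bdd_mul (f := fun p : ℝ × ℝ => f p.1) (c := M)
    (hmeas.comp measurable_fst).aestronglyMeasurable (ae_of_all _ fun p => hM p.1)
  refine h2.congr (ae_of_all _ fun p => ?_)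
  simp only [ContinuousLinearMap.mul_apply']
  by_cases hx : B < |p.1|
  · simp [hB _ hx]
  by_cases hy : B < |p.2|
  · simp [hB _ hy]
  rw [Set.indicator_of_mem]
  · ring
  · have := abs_le.1 (not_lt.1 hx)
    have := abs_le.1 (not_lt.1 hy)
    constructor <;> linarith

/-- The overlap of `[x, x + s]` and `[y, y + s]` has length `(s - |x - y|)⁺`. -/
lemma integral_overlap (x y s : ℝ) :
    ∫ c, (Set.Icc 0 s).indicator (fun _ => (1 : ℝ)) (c - x) *
      (Set.Icc 0 s).indicator (fun _ => (1 : ℝ)) (c - y) = max (s - |x - y|) 0 := by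
  have h : ∀ c, (Set.Icc 0 s).indicator (fun _ => (1 : ℝ)) (c - x) *
      (Set.Icc 0 s).indicator (fun _ => (1 : ℝ)) (c - y) =
      (Set.Icc (max x y) (min x y + s)).indicator (fun _ => (1 : ℝ)) c := by
    intro c
    simp only [Set.indicator_apply, Set.mem_Icc]
    rcases le_total x y with h | h <;> simp only [h, max_eq_left, max_eq_right, min_eq_left,
      min_eq_right] <;> split_ifs <;> norm_num <;> grind
  simp_rw [h]
  rw [integral_indicator measurableSet_Icc]
  rw [setIntegral_const, smul_eq_mul, mul_one, measureReal_def, Real.volume_Icc,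
    ENNReal.toReal_ofReal']
  congr 1
  rw [← max_sub_min_eq_abs]
  rw [max_comm, min_comm]
  ring

lemma tri_energy_nonneg {f : ℝ → ℝ} {B : ℝ}
    (hB : ∀ x, B < |x| → f x = 0) (hf : Integrable f) (s : ℝ) :
    0 ≤ ∫ p : ℝ × ℝ, max (s - |p.1 - p.2|) 0 * f p.1 * f p.2 ∂(volume.prod volume) := by
  set u : ℝ → ℝ := (Set.Icc 0 s).indicator (fun _ => (1 : ℝ)) with hu
  have hum : Measurable u := measurable_const.indicator measurableSet_Icc
  have hu1 : ∀ t, |u t| ≤ 1 := by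
    intro t
    simp only [hu, Set.indicator_apply]
    split_ifs <;> simp
  have hint : Integrable (Function.uncurry fun (p : ℝ × ℝ) (c : ℝ) =>
      (u (c - p.1) * f p.1) * (u (c - p.2) * f p.2))
      ((volume.prod volume).prod volume) := by
    have hw : Integrable ((Set.Icc (-B) (B + s)).indicator (fun _ => (1 : ℝ))) :=
      (integrable_indicator_iff measurableSet_Icc).2 (integrableOn_const (by simp))
    have h1 := (hf.mul_prod hf).mul_prod hw
    have h2 := h1.bdd_mul (f := fun q : (ℝ × ℝ) × ℝ => u (q.2 - q.1.1) * u (q.2 - q.1.2)) (c := 1)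
      (by fun_prop) (ae_of_all _ fun q => by
        rw [norm_mul]
        exact mul_le_one₀ (hu1 _) (norm_nonneg _) (hu1 _))
    refine h2.congr (ae_of_all _ fun ⟨⟨x, y⟩, c⟩ => ?_)
    simp only [Function.uncurry]
    by_cases hx : B < |x|
    · simp [hB _ hx]
    by_cases hc : c - x ∈ Set.Icc 0 s
    · rw [Set.indicator_of_mem]
      · ring
      · have := abs_le.1 (not_lt.1 hx)
        obtain ⟨h1, h2⟩ := hc
        constructor <;> linarith
    · simp [hu, hc]
  have hswap := integral_integral_swap hint
  have hl : ∀ p : ℝ × ℝ, ∫ c, (u (c - p.1) * f p.1) * (u (c - p.2) * f p.2) =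
      max (s - |p.1 - p.2|) 0 * f p.1 * f p.2 := by
    intro p
    rw [← integral_overlap p.1 p.2 s, mul_assoc, ← integral_mul_const]
    refine integral_congr_ae (ae_of_all _ fun c => ?_)
    simp only [hu]
    ring
  simp_rw [hl] at hswap
  rw [hswap]
  refine integral_nonneg fun c => ?_
  have := integral_prod_mul (μ := (volume : Measure ℝ)) (ν := (volume : Measure ℝ))
    (fun x => u (c - x) * f x) (fun y => u (c - y) * f y)
  simp only [Pi.zero_apply]
  rw [this]
  exact mul_self_nonneg _

lemma integral_tri_div_sq {d S : ℝ} (hd : 0 < d) (hS : d ≤ S) :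
    IntegrableOn (fun s => max (s - d) 0 / s ^ 2) (Set.Ioc 0 S) ∧
    ∫ s in Set.Ioc 0 S, max (s - d) 0 / s ^ 2 = Real.log S - Real.log d - 1 + d / S := by
  have e1 : Set.EqOn (fun s => max (s - d) 0 / s ^ 2) (fun _ => 0) (Set.Ioc 0 d) := by
    intro s hs
    simp [max_eq_right (sub_nonpos.2 hs.2)]
  have i1 : IntegrableOn (fun s => max (s - d) 0 / s ^ 2) (Set.Ioc 0 d) :=
    (integrableOn_congr_fun e1 measurableSet_Ioc).2 integrableOn_zero
  have c2 : ContinuousOn (fun s => max (s - d) 0 / s ^ 2) (Set.Icc d S) := by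
    refine ContinuousOn.div (by fun_prop) (by fun_prop) fun s hs => ?_
    have : 0 < s := hd.trans_le hs.1
    positivity
  have i2 : IntegrableOn (fun s => max (s - d) 0 / s ^ 2) (Set.Ioc d S) :=
    (c2.integrableOn_Icc).mono_set Set.Ioc_subset_Icc_self
  have hun : Set.Ioc 0 S = Set.Ioc 0 d ∪ Set.Ioc d S := (Set.Ioc_union_Ioc_eq_Ioc hd.le hS).symm
  refine ⟨hun ▸ i1.union i2, ?_⟩
  rw [hun, setIntegral_union (Set.Ioc_disjoint_Ioc_of_le le_rfl) measurableSet_Ioc i1 i2,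
    setIntegral_congr_fun measurableSet_Ioc e1, ← intervalIntegral.integral_of_le hS]
  have hS0 : 0 < S := hd.trans_le hS
  -- `log s + d / s` is a primitive of `1 / s - d / s²`.
  rw [intervalIntegral.integral_eq_sub_of_hasDerivAt (f := fun s => Real.log s + d / s)]
  · simp only [integral_zero]
    rw [div_self hd.ne']
    ring
  · intro s hs
    rw [Set.uIcc_of_le hS] at hs
    have hs0 : 0 < s := hd.trans_le hs.1
    have := (Real.hasDerivAt_log hs0.ne').add ((hasDerivAt_inv hs0.ne').const_mul d)
    refine this.congr_deriv ?_
    rw [max_eq_left (sub_nonneg.2 hs.1)]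
    field_simp
    ring
  · rw [intervalIntegrable_iff_integrableOn_Ioc_of_le hS]
    exact i2

lemma ae_sub_ne_zero : ∀ᵐ p : ℝ × ℝ ∂(volume.prod volume), p.1 - p.2 ≠ 0 := by
  have h : ∀ᵐ t : ℝ, t ≠ 0 := by simp [ae_iff]
  exact (quasiMeasurePreserving_sub (volume : Measure ℝ) volume).ae h

lemma integrableOn_log_Icc (a b : ℝ) : IntegrableOn Real.log (Set.Icc a b) := by
  have h : IntervalIntegrable Real.log volume a b := intervalIntegral.intervalIntegrable_log'
  rw [intervalIntegrable_iff'] at h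
  exact h.mono_set Set.Icc_subset_uIcc

lemma truncated_energy_nonneg {f : ℝ → ℝ} {M B S : ℝ} (hmeas : Measurable f)
    (hM : ∀ x, |f x| ≤ M) (hB : ∀ x, B < |x| → f x = 0) (hf : Integrable f)
    (hS : 2 * B ≤ S) :
    0 ≤ ∫ p : ℝ × ℝ, (Real.log S - Real.log (p.1 - p.2) - 1 + |p.1 - p.2| / S) * f p.1 * f p.2
      ∂(volume.prod volume) := by
  set G : ℝ × ℝ → ℝ → ℝ := fun p s => (max (s - |p.1 - p.2|) 0 / s ^ 2) * (f p.1 * f p.2) with hG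
  have hker : ∀ᵐ p : ℝ × ℝ ∂(volume.prod volume), f p.1 * f p.2 ≠ 0 →
      0 < |p.1 - p.2| ∧ |p.1 - p.2| ≤ S := by
    filter_upwards [ae_sub_ne_zero] with p hp h
    refine ⟨abs_pos.2 hp, ?_⟩
    have hx : ¬ B < |p.1| := fun hx => h (by simp [hB _ hx])
    have hy : ¬ B < |p.2| := fun hy => h (by simp [hB _ hy])
    have := abs_sub p.1 p.2
    linarith
  have hk : Integrable (fun p : ℝ × ℝ =>
      (Real.log S - Real.log (p.1 - p.2) - 1 + |p.1 - p.2| / S) * f p.1 * f p.2)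
      (volume.prod volume) := by
    refine integrable_kernel (K := fun t => Real.log S - Real.log t - 1 + |t| / S) hmeas hM hB hf ?_
    have hc : ∀ c : ℝ, IntegrableOn (fun _ : ℝ => c) (Set.Icc (-(2 * B)) (2 * B)) := fun c =>
      integrableOn_const (by simp)
    exact (((hc _).sub (integrableOn_log_Icc _ _)).sub (hc 1)).add
      (by fun_prop : Continuous fun t : ℝ => |t| / S).continuousOn.integrableOn_Icc
  have hval : ∀ᵐ p : ℝ × ℝ ∂(volume.prod volume), ∫ s in Set.Ioc 0 S, G p s =
      (Real.log S - Real.log (p.1 - p.2) - 1 + |p.1 - p.2| / S) * f p.1 * f p.2 := by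
    filter_upwards [hker] with p hp
    simp only [hG]
    rw [integral_mul_const]
    by_cases h : f p.1 * f p.2 = 0
    · rw [h, mul_assoc, h]; simp
    · rw [(integral_tri_div_sq (hp h).1 (hp h).2).2, Real.log_abs, mul_assoc]
  have hint : Integrable (Function.uncurry G)
      ((volume.prod volume).prod (volume.restrict (Set.Ioc 0 S))) := by
    have hGm : Measurable (Function.uncurry G) := by
      simp only [hG, Function.uncurry_def]
      fun_prop
    rw [integrable_prod_iff hGm.aestronglyMeasurable]
    constructor
    · filter_upwards [hker] with p hp
      by_cases h : f p.1 * f p.2 = 0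
      · simp [hG, h]
      · exact (integral_tri_div_sq (hp h).1 (hp h).2).1.mul_const (f p.1 * f p.2)
    · refine hk.norm.congr ?_
      filter_upwards [hval] with p hp
      -- The kernel is nonnegative, so the sign of `G p s` does not depend on `s`.
      have : ∀ s, ‖Function.uncurry G (p, s)‖ =
          (max (s - |p.1 - p.2|) 0 / s ^ 2) * ‖f p.1 * f p.2‖ := by
        intro s
        simp only [hG, Function.uncurry]
        rw [norm_mul, Real.norm_of_nonneg (by positivity)]
      simp_rw [this]
      rw [integral_mul_const, ← hp]
      simp only [hG]
      rw [integral_mul_const, norm_mul, Real.norm_of_nonneg]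
      exact integral_nonneg fun s => by positivity
  rw [← integral_congr_ae hval, integral_integral_swap hint]
  refine integral_nonneg fun s => ?_
  have : ∀ p : ℝ × ℝ, G p s = (1 / s ^ 2) * (max (s - |p.1 - p.2|) 0 * f p.1 * f p.2) := by
    intro p
    simp only [hG]
    ring
  simp_rw [this]
  simp only [Pi.zero_apply]
  rw [integral_const_mul]
  exact mul_nonneg (by positivity) (tri_energy_nonneg hB hf s)

/-- nonnegativity of the logarithmic energy of a bounded, compactly
supported signed density of total mass zero. -/
theorem log_energy_nonneg_of_mass_zero
    (f : ℝ → ℝ) (hmeas : Measurable f) (hbd : ∃ M : ℝ, ∀ x, |f x| ≤ M)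
    (hsupp : HasCompactSupport f) (hzero : (∫ x, f x) = 0) :
    0 ≤ ∫ l : ℝ, ∫ m : ℝ, Real.log (1 / |l - m|) * f l * f m := by
  obtain ⟨M, hM⟩ := hbd
  obtain ⟨B, hB'⟩ := hsupp.isCompact.isBounded.subset_closedBall 0
  have hB : ∀ x, B < |x| → f x = 0 := by
    intro x hx
    by_contra h
    have := hB' (subset_tsupport f h)
    rw [Metric.mem_closedBall, dist_zero_right, Real.norm_eq_abs] at this
    linarith
  have hf : Integrable f := by
    refine (integrableOn_iff_integrable_of_support_subset (subset_tsupport f)).1 ?_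
    exact Measure.integrableOn_of_bounded hsupp.isCompact.measure_ne_top
      hmeas.aestronglyMeasurable (ae_of_all _ hM)
  have hlog : Integrable (fun p : ℝ × ℝ => Real.log (1 / |p.1 - p.2|) * f p.1 * f p.2)
      (volume.prod volume) := by
    refine integrable_kernel (K := fun t => Real.log (1 / |t|)) hmeas hM hB hf ?_
    simpa using (integrableOn_log_Icc _ _).neg
  have habs : Integrable (fun p : ℝ × ℝ => |p.1 - p.2| * f p.1 * f p.2) (volume.prod volume) :=
    integrable_kernel (K := fun t => |t|) hmeas hM hB hf
      continuous_abs.continuousOn.integrableOn_Icc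
  rw [← integral_prod (fun p : ℝ × ℝ => Real.log (1 / |p.1 - p.2|) * f p.1 * f p.2) hlog]
  set E := ∫ p : ℝ × ℝ, Real.log (1 / |p.1 - p.2|) * f p.1 * f p.2 ∂(volume.prod volume) with hE
  set D := ∫ p : ℝ × ℝ, |p.1 - p.2| * f p.1 * f p.2 ∂(volume.prod volume) with hD
  have key : ∀ S, 2 * B ≤ S → 0 ≤ E + D / S := by
    intro S hS
    have h := truncated_energy_nonneg hmeas hM hB hf hS
    have hsplit : ∀ p : ℝ × ℝ,
        (Real.log S - Real.log (p.1 - p.2) - 1 + |p.1 - p.2| / S) * f p.1 * f p.2 =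
        (Real.log S - 1) * (f p.1 * f p.2) + Real.log (1 / |p.1 - p.2|) * f p.1 * f p.2 +
          (|p.1 - p.2| * f p.1 * f p.2) / S := by
      intro p
      rw [one_div, Real.log_inv, Real.log_abs]
      ring
    simp_rw [hsplit] at h
    have hff : Integrable (fun p : ℝ × ℝ => (Real.log S - 1) * (f p.1 * f p.2))
        (volume.prod volume) := (hf.mul_prod hf).const_mul _
    have hsum : Integrable (fun p : ℝ × ℝ => (Real.log S - 1) * (f p.1 * f p.2) +
        Real.log (1 / |p.1 - p.2|) * f p.1 * f p.2) (volume.prod volume) := hff.add hlog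
    rw [integral_add hsum (habs.div_const S), integral_add hff hlog,
      integral_const_mul, integral_prod_mul, hzero, integral_div] at h
    rwa [mul_zero, mul_zero, zero_add] at h
  have hlim : Filter.Tendsto (fun S : ℝ => E + D / S) Filter.atTop (nhds (E + 0)) :=
    tendsto_const_nhds.add (tendsto_const_nhds.div_atTop Filter.tendsto_id)
  rw [add_zero] at hlim
  exact ge_of_tendsto hlim ((Filter.eventually_ge_atTop (2 * B)).mono key)
end

section
/- (Quadratic equation for the equilibrium Stieltjes transform) Let ρ : ℝ → [0,∞) be a probability density supported in [−2,2] that is Hölder continuous on ℝ, and let V : ℝ → ℝ be differentiable with V'(λ) = 2·p.v.∫_{-2}^{2} ρ(μ)/(λ−μ) dμ for every λ in the support of ρ (principal value integral). Let g(z) = ∫_{-2}^{2} ρ(λ)/(z−λ) dλ. Then for every z ∈ ℂ ∖ [−2,2]: g(z)² = ∫_{-2}^{2} V'(λ) ρ(λ)/(z−λ) dλ. Equivalently, g satisfies g(z)² − V'(z)g(z) + Q(z) = 0 with Q(z) = ∫ (V'(z)−V'(λ))ρ(λ)/(z−λ) dλ whenever V' extends to z. -/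
/-!
Write `w l = ρ l / (z - l)` and let `H_δ l = ∫_{|l-μ|>δ} ρ μ / (l - μ) dμ` be the truncated
Hilbert transform of `ρ`. Since `ρ l = w l (z - l)`, symmetrizing the double integral in
`l ↔ μ` cancels the singular denominator (`cut_symmetrization`):
`∫ 2 H_δ(l) w(l) dl = ∬_{|l-μ|>δ} w(l) w(μ) dl dμ`.
Both sides converge as `δ → 0⁺`. The right side tends to `(∫ w)² = g(z)²` because the diagonal
is null (`tendsto_cut_double_integral`). On the left, `2 H_δ → V'` wherever `ρ ≠ 0`, and
dominated convergence applies because Hölder continuity bounds `H_δ` uniformly in `δ` and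
`l ∈ [-2,2]` (`exists_bound_cut_hilbert`).
-/

open MeasureTheory Set Filter Topology

/-- The Hilbert kernel `1/t` truncated to `|t| > δ`. -/
noncomputable def cutKernel (δ t : ℝ) : ℝ := if δ < |t| then t⁻¹ else 0

lemma cutKernel_neg (δ t : ℝ) : cutKernel δ (-t) = -cutKernel δ t := by
  unfold cutKernel
  rw [abs_neg]
  split_ifs <;> simp [inv_neg]

lemma abs_cutKernel_le (δ t : ℝ) : |cutKernel δ t| ≤ |t|⁻¹ := by
  unfold cutKernel
  split_ifs
  · rw [abs_inv]
  · simp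

lemma abs_cutKernel_le_inv {δ : ℝ} (hδ : 0 < δ) (t : ℝ) : |cutKernel δ t| ≤ δ⁻¹ := by
  unfold cutKernel
  split_ifs with h
  · rw [abs_inv]
    exact inv_anti₀ hδ h.le
  · simpa using hδ.le

lemma measurable_cutKernel (δ : ℝ) : Measurable (cutKernel δ) :=
  Measurable.ite (measurableSet_lt measurable_const measurable_id.abs) measurable_inv
    measurable_const

lemma integrableOn_abs_rpow {α : ℝ} (hα : 0 < α) (b : ℝ) :
    IntegrableOn (fun t : ℝ => |t| ^ (α - 1)) (Icc (-b) b) := by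
  have h := (intervalIntegral.intervalIntegrable_rpow' (a := 0) (b := b) (r := α - 1) (by linarith))
  have h1 : IntegrableOn (fun t : ℝ => |t| ^ (α - 1)) (Ioc 0 b) := by
    refine (h.1).congr_fun (fun t ht => ?_) measurableSet_Ioc
    simp only [abs_of_pos ht.1]
  have h2 : IntegrableOn (fun t : ℝ => |t| ^ (α - 1)) (Ico (-b) 0) := by
    have := h1.comp_neg
    simpa using this
  have h3 : IntegrableOn (fun t : ℝ => |t| ^ (α - 1)) {0} :=
    integrableOn_singleton (hx := by simp)
  refine ((h1.union h2).union h3).mono_set (fun t ht => ?_)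
  rcases lt_trichotomy t 0 with h0 | h0 | h0
  · exact Or.inl (Or.inr ⟨ht.1, h0⟩)
  · exact Or.inr h0
  · exact Or.inl (Or.inl ⟨h0, ht.2⟩)

/-- The truncated Hilbert transform is bounded uniformly in the truncation. By oddness of the kernel,
`2 H_δ l = ∫_{|t|>δ} (ρ (l - t) - ρ (l + t)) / t dt`, whose integrand is supported in `[-4,4]` and
dominated there by `L 2^α |t|^(α-1)`. -/
lemma exists_bound_cut_hilbert (ρ : ℝ → ℝ) (hc : Continuous ρ)
    (hsupp : ∀ x, x ∉ Icc (-2:ℝ) 2 → ρ x = 0)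
    {α L : ℝ} (hα : 0 < α) (hL : 0 < L)
    (hH : ∀ x y : ℝ, |ρ x - ρ y| ≤ L * |x - y| ^ α) :
    ∃ C : ℝ, ∀ δ > 0, ∀ l ∈ Icc (-2:ℝ) 2,
      |∫ μ in Icc (-2:ℝ) 2, cutKernel δ (l - μ) * ρ μ| ≤ C := by
  have hi : Integrable ρ := by
    refine hc.integrable_of_hasCompactSupport
      (HasCompactSupport.intro (isCompact_Icc (a := (-2:ℝ)) (b := 2)) hsupp)
  set B : ℝ → ℝ := (Icc (-4:ℝ) 4).indicator (fun t => L * 2 ^ α * |t| ^ (α - 1)) with hB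
  have hBi : Integrable B :=
    (integrable_indicator_iff measurableSet_Icc).2 ((integrableOn_abs_rpow hα 4).const_mul _)
  refine ⟨(∫ t, B t) / 2, fun δ hδ l hl => ?_⟩
  have e0 : ∫ μ in Icc (-2:ℝ) 2, cutKernel δ (l - μ) * ρ μ = ∫ μ, cutKernel δ (l - μ) * ρ μ :=
    setIntegral_eq_integral_of_forall_compl_eq_zero (fun x hx => by simp [hsupp x hx])
  have e1 : ∫ μ, cutKernel δ (l - μ) * ρ μ = ∫ t, cutKernel δ t * ρ (l - t) := by
    rw [← integral_sub_left_eq_self _ volume l]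
    simp
  -- Substitute `t ↦ -t`; the kernel is odd.
  have e2 : ∫ t, cutKernel δ t * ρ (l - t) = - ∫ t, cutKernel δ t * ρ (l + t) := by
    rw [← integral_neg_eq_self, ← integral_neg]
    simp [cutKernel_neg]
  have hb : ∀ f : ℝ → ℝ, Integrable f → Integrable (fun t => cutKernel δ t * f t) := fun f hf =>
    hf.bdd_mul (measurable_cutKernel δ).aestronglyMeasurable
      (Eventually.of_forall fun t => abs_cutKernel_le_inv hδ t)
  have e3 : 2 * ∫ t, cutKernel δ t * ρ (l - t)
      = ∫ t, cutKernel δ t * (ρ (l - t) - ρ (l + t)) := by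
    simp_rw [mul_sub]
    rw [integral_sub (hb _ (hi.comp_sub_left l)) (hb _ (hi.comp_add_left l))]
    linarith
  have e4 : |∫ t, cutKernel δ t * (ρ (l - t) - ρ (l + t))| ≤ ∫ t, B t := by
    rw [← Real.norm_eq_abs]
    refine norm_integral_le_of_norm_le hBi (Eventually.of_forall fun t => ?_)
    rw [norm_mul, Real.norm_eq_abs, Real.norm_eq_abs]
    by_cases ht : t ∈ Icc (-4:ℝ) 4
    · rw [hB, indicator_of_mem ht]
      rcases eq_or_ne t 0 with rfl | h0
      · simp
        positivity
      have hp : 0 < |t| := abs_pos.2 h0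
      calc _ ≤ |t|⁻¹ * (L * |(l - t) - (l + t)| ^ α) := by
            gcongr
            · exact abs_cutKernel_le δ t
            · exact hH _ _
        _ = _ := by
            have : (l - t) - (l + t) = -(2 * t) := by ring
            rw [this, abs_neg, abs_mul, abs_two, Real.mul_rpow (by norm_num) hp.le,
              Real.rpow_sub_one hp.ne']
            field_simp
    · rw [hB, indicator_of_notMem ht]
      have h1 : l - t ∉ Icc (-2:ℝ) 2 := fun h => ht ⟨by linarith [h.1, h.2, hl.1, hl.2],
        by linarith [h.1, h.2, hl.1, hl.2]⟩
      have h2 : l + t ∉ Icc (-2:ℝ) 2 := fun h => ht ⟨by linarith [h.1, h.2, hl.1, hl.2],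
        by linarith [h.1, h.2, hl.1, hl.2]⟩
      simp [hsupp _ h1, hsupp _ h2]
  rw [e0, e1, le_div_iff₀ two_pos, ← abs_two, ← abs_mul, mul_comm, e3]
  simpa using e4

/-- Averaging the integrand with its image under `l ↔ μ` removes the singularity, since
`w l * (w μ * (z - μ)) - w μ * (w l * (z - l)) = (l - μ) * w l * w μ`. -/
lemma cut_symmetrization {ν : Measure ℝ} [IsFiniteMeasure ν] {ρ : ℝ → ℝ} {w : ℝ → ℂ} {z : ℂ}
    (hρm : Measurable ρ) (hwm : Measurable w) {R M : ℝ}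
    (hR : ∀ x, |ρ x| ≤ R) (hM : ∀ x, ‖w x‖ ≤ M)
    (hw : ∀ x, (ρ x : ℂ) = w x * (z - x)) {δ : ℝ} (hδ : 0 < δ) :
    ∫ l, ((2 * ∫ μ, cutKernel δ (l - μ) * ρ μ ∂ν : ℝ) : ℂ) * w l ∂ν
      = ∫ l, w l * ∫ μ, (if δ < |l - μ| then w μ else 0) ∂ν ∂ν := by
  set F : ℝ → ℝ → ℂ := fun l μ => ((cutKernel δ (l - μ) * ρ μ : ℝ) : ℂ) * w l with hF
  have hFm : Measurable (Function.uncurry F) := by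
    have := measurable_cutKernel δ
    simp only [hF, Function.uncurry_def]
    fun_prop
  have hR0 : 0 ≤ R := (abs_nonneg _).trans (hR 0)
  have hFi : Integrable (Function.uncurry F) (ν.prod ν) := by
    refine Integrable.of_bound hFm.aestronglyMeasurable (δ⁻¹ * R * M)
      (Eventually.of_forall fun p => ?_)
    simp only [hF, Function.uncurry_def, norm_mul, Complex.norm_real, Real.norm_eq_abs]
    gcongr
    · exact abs_cutKernel_le_inv hδ _
    · exact hR _
    · exact hM _
  have hFi' : Integrable (Function.uncurry fun l μ => F μ l) (ν.prod ν) := hFi.swap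
  have key : ∀ l μ, F l μ + F μ l = w l * (if δ < |l - μ| then w μ else 0) := by
    intro l μ
    have h1 : cutKernel δ (μ - l) = - cutKernel δ (l - μ) := by
      rw [← cutKernel_neg, neg_sub]
    simp only [hF, h1, Complex.ofReal_mul, hw]
    unfold cutKernel
    split_ifs with h
    · have h0 : ((l - μ : ℝ) : ℂ) ≠ 0 := by
        intro h0
        rw [Complex.ofReal_eq_zero.1 h0, abs_zero] at h
        linarith
      push_cast at h0 ⊢
      field_simp
      ring
    · simp
  calc _ = 2 * ∫ l, ∫ μ, F l μ ∂ν ∂ν := by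
        rw [← integral_const_mul]
        refine integral_congr_ae (Eventually.of_forall fun l => ?_)
        simp only [hF]
        rw [integral_mul_const, integral_complex_ofReal]
        push_cast
        ring
    _ = (∫ l, ∫ μ, F l μ ∂ν ∂ν) + ∫ l, ∫ μ, F μ l ∂ν ∂ν := by
        rw [two_mul]
        congr 1
        exact integral_integral_swap hFi
    _ = ∫ l, ∫ μ, (F l μ + F μ l) ∂ν ∂ν := (integral_integral_add hFi hFi').symm
    _ = _ := by
        simp_rw [key, integral_const_mul]

lemma tendsto_cut_double_integral {ν : Measure ℝ} [IsFiniteMeasure ν] [NullSingletonClass ν] {w : ℝ → ℂ}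
    (hwm : Measurable w) {M : ℝ} (hM : ∀ x, ‖w x‖ ≤ M) :
    Tendsto (fun δ : ℝ => ∫ l, w l * ∫ μ, (if δ < |l - μ| then w μ else 0) ∂ν ∂ν)
      (𝓝[>] 0) (𝓝 ((∫ l, w l ∂ν) ^ 2)) := by
  have hM0 : 0 ≤ M := (norm_nonneg _).trans (hM 0)
  have hm : ∀ δ : ℝ, Measurable (Function.uncurry fun l μ : ℝ => if δ < |l - μ| then w μ else 0) :=
    fun δ => Measurable.ite
      (measurableSet_lt measurable_const (measurable_fst.sub measurable_snd).abs)
      (hwm.comp measurable_snd) measurable_const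
  have hb : ∀ δ l μ : ℝ, ‖if δ < |l - μ| then w μ else 0‖ ≤ M := by
    intro δ l μ
    split_ifs
    · exact hM μ
    · simpa using hM0
  have hin : ∀ l : ℝ, Tendsto (fun δ : ℝ => ∫ μ, (if δ < |l - μ| then w μ else 0) ∂ν)
      (𝓝[>] 0) (𝓝 (∫ μ, w μ ∂ν)) := by
    intro l
    refine tendsto_integral_filter_of_dominated_convergence (fun _ => M)
      (Eventually.of_forall fun δ => ?_) (Eventually.of_forall fun δ => Eventually.of_forall (hb δ l))
      (integrable_const M) ?_
    · exact ((hm δ).comp measurable_prodMk_left).aestronglyMeasurable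
    · filter_upwards [compl_mem_ae_iff.2 (measure_singleton (μ := ν) l)] with μ hμ
      have : 0 < |l - μ| := abs_pos.2 (sub_ne_zero.2 (Ne.symm hμ))
      refine tendsto_const_nhds.congr' ?_
      filter_upwards [mem_nhdsWithin_of_mem_nhds (Iio_mem_nhds this)] with δ hδ
      rw [if_pos (mem_Iio.1 hδ)]
  have hlim : (∫ l, w l ∂ν) ^ 2 = ∫ l, w l * ∫ μ, w μ ∂ν ∂ν := by
    rw [integral_mul_const, sq]
  rw [hlim]
  refine tendsto_integral_filter_of_dominated_convergence (fun _ => M * (M * ν.real univ))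
    (Eventually.of_forall fun δ => ?_) (Eventually.of_forall fun δ => Eventually.of_forall fun l => ?_)
    (integrable_const _) (Eventually.of_forall fun l => (hin l).const_mul _)
  · exact hwm.aestronglyMeasurable.mul
      (hm δ).stronglyMeasurable.integral_prod_right.aestronglyMeasurable
  · rw [norm_mul]
    gcongr
    · exact hM l
    · exact norm_integral_le_of_norm_le_const (Eventually.of_forall (hb δ l))

/-- the quadratic equation for the Stieltjes transform of an equilibrium
density: `g(z)² = ∫ V'(λ)ρ(λ)/(z-λ) dλ` for `z ∉ [-2,2]`. -/
theorem equilibrium_stieltjes_quadratic_equation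
    (ρ : ℝ → ℝ) (hnn : ∀ x, 0 ≤ ρ x) (hint : (∫ x, ρ x) = 1)
    (hsupp : ∀ x, x ∉ Set.Icc (-2:ℝ) 2 → ρ x = 0)
    (hHolder : ∃ α L : ℝ, 0 < α ∧ α ≤ 1 ∧ 0 < L ∧
      ∀ x y : ℝ, |ρ x - ρ y| ≤ L * |x - y| ^ α)
    (V : ℝ → ℝ) (hV : Differentiable ℝ V)
    (hEL : ∀ l : ℝ, l ∈ Function.support ρ →
      Filter.Tendsto
        (fun δ : ℝ => 2 * ∫ μ in {μ : ℝ | δ < |l - μ|} ∩ Set.Icc (-2:ℝ) 2, ρ μ / (l - μ))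
        (nhdsWithin 0 (Set.Ioi 0)) (nhds (deriv V l))) :
    ∀ z : ℂ, z ∉ (Complex.ofReal '' Set.Icc (-2:ℝ) 2) →
      (∫ l in (-2:ℝ)..2, (ρ l : ℂ) / (z - l)) ^ 2
        = ∫ l in (-2:ℝ)..2, ((deriv V l * ρ l : ℝ) : ℂ) / (z - l) := by
  intro z hz
  obtain ⟨α, L, hα, -, hL, hH⟩ := hHolder
  have hc : Continuous ρ := by
    rw [continuous_iff_continuousAt]
    intro x
    rw [ContinuousAt, tendsto_iff_dist_tendsto_zero]
    have h0 : Tendsto (fun y : ℝ => L * |y - x| ^ α) (𝓝 x) (𝓝 0) := by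
      have : ContinuousAt (fun y : ℝ => L * |y - x| ^ α) x := by
        refine continuousAt_const.mul (ContinuousAt.rpow_const (by fun_prop) (Or.inr hα.le))
      simpa [ContinuousAt, Real.zero_rpow hα.ne'] using this
    exact squeeze_zero (fun _ => dist_nonneg) (fun y => hH y x) h0
  have hzne : ∀ l ∈ Icc (-2:ℝ) 2, z - (l : ℂ) ≠ 0 := fun l hl h =>
    hz ⟨l, hl, (sub_eq_zero.1 h).symm⟩
  set w : ℝ → ℂ := fun l => (ρ l : ℂ) / (z - l) with hwdef
  -- Also valid at a real `x = z`: such `x` lies outside `[-2,2]`, where `ρ` vanishes.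
  have hw : ∀ x, (ρ x : ℂ) = w x * (z - x) := by
    intro x
    by_cases hx : x ∈ Icc (-2:ℝ) 2
    · simp only [hwdef]
      rw [div_mul_cancel₀ _ (hzne x hx)]
    · simp [hwdef, hsupp x hx]
  have hρm : Measurable ρ := hc.measurable
  have hwm : Measurable w := by fun_prop
  obtain ⟨R, hR⟩ : ∃ R, ∀ x, |ρ x| ≤ R :=
    (HasCompactSupport.intro (isCompact_Icc (a := (-2:ℝ)) (b := 2)) hsupp).exists_bound_of_continuous
      hc
  obtain ⟨M, hM⟩ : ∃ M, ∀ x, ‖w x‖ ≤ M := by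
    have hcw : ContinuousOn w (Icc (-2:ℝ) 2) :=
      ContinuousOn.div (by fun_prop) (by fun_prop) hzne
    obtain ⟨M, hM⟩ := isCompact_Icc.exists_bound_of_continuousOn hcw
    refine ⟨M, fun x => ?_⟩
    by_cases hx : x ∈ Icc (-2:ℝ) 2
    · exact hM x hx
    · have h0 : w x = 0 := by simp [hwdef, hsupp x hx]
      rw [h0, norm_zero]
      exact (norm_nonneg _).trans (hM 0 (by constructor <;> norm_num))
  obtain ⟨C, hC⟩ := exists_bound_cut_hilbert ρ hc hsupp hα hL hH
  have hpv : ∀ δ l : ℝ, ∫ μ in {μ : ℝ | δ < |l - μ|} ∩ Icc (-2:ℝ) 2, ρ μ / (l - μ)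
      = ∫ μ in Icc (-2:ℝ) 2, cutKernel δ (l - μ) * ρ μ := by
    intro δ l
    have hs : MeasurableSet {μ : ℝ | δ < |l - μ|} :=
      measurableSet_lt measurable_const (measurable_const.sub measurable_id).abs
    rw [← Measure.restrict_restrict hs, ← integral_indicator hs]
    refine integral_congr_ae (Eventually.of_forall fun μ => ?_)
    simp only [indicator, mem_ofPred_eq, cutKernel]
    split_ifs
    · rw [div_eq_inv_mul]
    · simp
  rw [intervalIntegral.integral_of_le (by norm_num), intervalIntegral.integral_of_le (by norm_num),
    ← integral_Icc_eq_integral_Ioc, ← integral_Icc_eq_integral_Ioc]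
  have hlim1 := tendsto_cut_double_integral (ν := volume.restrict (Icc (-2:ℝ) 2)) hwm hM
  have hlim2 : Tendsto (fun δ : ℝ => ∫ l in Icc (-2:ℝ) 2,
      ((2 * ∫ μ in Icc (-2:ℝ) 2, cutKernel δ (l - μ) * ρ μ : ℝ) : ℂ) * w l) (𝓝[>] 0)
      (𝓝 (∫ l in Icc (-2:ℝ) 2, ((deriv V l * ρ l : ℝ) : ℂ) / (z - l))) := by
    refine tendsto_integral_filter_of_dominated_convergence (fun _ => 2 * C * M)
      (Eventually.of_forall fun δ => ?_) ?_ (integrable_const _)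
      (Eventually.of_forall fun l => ?_)
    · have hm : Measurable (Function.uncurry fun l μ : ℝ => cutKernel δ (l - μ) * ρ μ) := by
        have := measurable_cutKernel δ
        simp only [Function.uncurry_def]
        fun_prop
      have h2 := (hm.stronglyMeasurable.integral_prod_right
        (ν := volume.restrict (Icc (-2:ℝ) 2))).measurable
      exact ((Complex.measurable_ofReal.comp (h2.const_mul 2)).mul hwm).aestronglyMeasurable
    · filter_upwards [self_mem_nhdsWithin] with δ hδ
      filter_upwards [ae_restrict_mem measurableSet_Icc] with l hl
      rw [norm_mul, Complex.norm_real, Real.norm_eq_abs, abs_mul, abs_two]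
      have := hC δ hδ l hl
      have hC0 : 0 ≤ C := (abs_nonneg _).trans this
      gcongr
      exact hM l
    · by_cases hl : ρ l = 0
      · simp [hwdef, hl]
      · have h := hEL l hl
        simp only [hpv] at h
        have h' := ((Complex.continuous_ofReal.tendsto _).comp h).mul_const (w l)
        have e : ((deriv V l * ρ l : ℝ) : ℂ) / (z - l) = ((deriv V l : ℝ) : ℂ) * w l := by
          simp only [hwdef]
          push_cast
          ring
        rw [e]
        exact h'
  refine tendsto_nhds_unique hlim1 (hlim2.congr' ?_)
  filter_upwards [self_mem_nhdsWithin] with δ hδ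
  exact cut_symmetrization hρm hwm hR hM hw hδ
end
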